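/- arXiv:1601.01211 — 2 statements merged into one kernel-verified Lean document; each statement's English description precedes it below -/
import Mathlib

section
/- Let G be a simple graph with n vertices and e edges, and let c = 2e/n². Then the number N of 4-edge paths in G satisfies N ≤ (1/2)·max( (1−√(1−c))²·((c+1)√(1−c)+c), c^{5/2} )·n⁵. -/
/-- The number of 4-edge walks in `G`: sequences of 5 (not necessarily distinct)
vertices with consecutive vertices adjacent. -/
noncomputable def walkCount4 {V : Type*} (G : SimpleGraph V) : ℕ :=
  Nat.card {f : Fin 5 → V // ∀ i : Fin 4, G.Adj (f i.castSucc) (f i.succ)}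

/-- The number of 4-edge paths in `G` (subgraphs isomorphic to the path with 4 edges):
each such path corresponds to exactly two injective tuples (its two directions). -/
noncomputable def pathCount4 {V : Type*} (G : SimpleGraph V) : ℕ :=
  Nat.card {f : Fin 5 → V //
    Function.Injective f ∧ ∀ i : Fin 4, G.Adj (f i.castSucc) (f i.succ)} / 2


section P4
open Classical Finset

noncomputable def adjR {V : Type*} (G : SimpleGraph V) (u v : V) : ℝ := if G.Adj u v then 1 else 0

/-- weighted count of 4-edge walks, by the middle vertex -/
noncomputable def wk {V : Type*} [Fintype V] (A : V → V → ℝ) : ℝ :=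
  ∑ x, (∑ y, A x y * ∑ z, A y z) ^ 2

noncomputable def ss {V : Type*} [Fintype V] (A : V → V → ℝ) : ℝ :=
  ∑ x, (∑ y, A x y) ^ 2

noncomputable def tot {V : Type*} [Fintype V] (A : V → V → ℝ) : ℝ :=
  ∑ x, ∑ y, A x y

lemma adjR_symm {V : Type*} (G : SimpleGraph V) (u v : V) : adjR G u v = adjR G v u := by
  simp [adjR, G.adj_comm]

lemma adjR_self {V : Type*} (G : SimpleGraph V) (u : V) : adjR G u u = 0 := by
  simp [adjR]

lemma adjR_nonneg {V : Type*} (G : SimpleGraph V) (u v : V) : 0 ≤ adjR G u v := by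
  unfold adjR; split_ifs <;> norm_num

lemma adjR_le_one {V : Type*} (G : SimpleGraph V) (u v : V) : adjR G u v ≤ 1 := by
  unfold adjR; split_ifs <;> norm_num

lemma kelmans_real {V : Type*} [Fintype V] (A A' : V → V → ℝ) (q e : V → ℝ) (u v : V)
    (Qn S : ℝ) (huv : u ≠ v)
    (hQn : Qn = ∑ x, q x) (he : ∀ x, e x = (if x = u then 1 else 0) - (if x = v then 1 else 0))
    (hqu : q u = 0) (hqv : q v = 0)
    (hA' : ∀ x y, A' x y = A x y + e x * q y + q x * e y)
    (hA0 : ∀ x y, 0 ≤ A x y)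
    (hS : S = (∑ x, q x * ∑ y, A x y) - Qn * A u v)
    (hS0 : 0 ≤ S)
    (hpt : ∀ x, - (Qn * A u v) * e x ≤ Qn * (A x u - A x v)
       + q x * ((∑ y, A u y) - (∑ y, A v y) + 2 * Qn))
    (hd2 : (∑ y, A v y * ∑ z, A y z) ≤ (∑ y, A u y * ∑ z, A y z)) :
    wk A ≤ wk A' ∧ tot A' = tot A ∧
      ss A' = ss A + 2 * Qn * ((∑ y, A u y) - (∑ y, A v y)) + 2 * Qn ^ 2 := by
  have hse : ∑ x, e x = 0 := by simp [he]
  have hef : ∀ f : V → ℝ, ∑ x, e x * f x = f u - f v := by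
    intro f; simp [he, sub_mul, Finset.sum_sub_distrib]
  have hd : ∀ x, ∑ y, A' x y = (∑ y, A x y) + e x * Qn := by
    intro x
    simp only [hA', Finset.sum_add_distrib, ← Finset.mul_sum, hse, hQn]; ring
  have hqe : ∑ x, q x * e x = 0 := by
    simp only [mul_comm (q _)]; rw [hef]; simp [hqu, hqv]
  have hd2' : ∀ x, ∑ y, A' x y * ∑ z, A' y z = (∑ y, A x y * ∑ z, A y z)
      + (Qn * (A x u - A x v) + e x * (∑ x, q x * ∑ y, A x y)
        + q x * ((∑ y, A u y) - (∑ y, A v y) + Qn * ∑ y, e y * e y)) := by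
    intro x
    have h1 : ∀ y, A' x y * ∑ z, A' y z = A x y * (∑ z, A y z) + Qn * (e y * A x y)
       + e x * (q y * ∑ z, A y z) + e x * Qn * (q y * e y) + q x * (e y * ∑ z, A y z)
       + q x * Qn * (e y * e y) := by
      intro y; rw [hd, hA']; ring
    simp only [h1, Finset.sum_add_distrib, ← Finset.mul_sum, hqe, hef (fun y => A x y),
      hef (fun y => ∑ z, A y z)]
    ring
  have hee : ∑ y, e y * e y = 2 := by
    rw [hef]; simp only [he]
    simp [huv, Ne.symm huv]; norm_num
  refine ⟨?_, ?_, ?_⟩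
  · have key : ∀ x, (∑ y, A x y * ∑ z, A y z) ^ 2
        + 2 * S * (e x * (∑ y, A x y * ∑ z, A y z)) ≤ (∑ y, A' x y * ∑ z, A' y z) ^ 2 := by
      intro x
      rw [hd2' x, hee]
      have h0 : 0 ≤ ∑ y, A x y * ∑ z, A y z :=
        Finset.sum_nonneg fun y _ => mul_nonneg (hA0 _ _) (Finset.sum_nonneg fun z _ => hA0 _ _)
      have h1 := hpt x
      set D := ∑ y, A x y * ∑ z, A y z
      have h2 : S * e x ≤ Qn * (A x u - A x v) + e x * (∑ x, q x * ∑ y, A x y)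
        + q x * ((∑ y, A u y) - (∑ y, A v y) + Qn * 2) := by
        rw [hS]; linarith
      set Δ := Qn * (A x u - A x v) + e x * (∑ x, q x * ∑ y, A x y)
        + q x * ((∑ y, A u y) - (∑ y, A v y) + Qn * 2)
      nlinarith [sq_nonneg Δ, mul_le_mul_of_nonneg_left h2 h0]
    have := Finset.sum_le_sum (fun x (_ : x ∈ Finset.univ) => key x)
    rw [Finset.sum_add_distrib, ← Finset.mul_sum, hef (fun x => ∑ y, A x y * ∑ z, A y z)] at this
    unfold wk
    nlinarith [mul_nonneg hS0 (sub_nonneg.2 hd2)]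
  · unfold tot
    simp only [hd, Finset.sum_add_distrib, ← Finset.sum_mul, hse]; ring
  · unfold ss
    have h1 : ∀ x, (∑ y, A' x y) ^ 2 = (∑ y, A x y) ^ 2 + 2 * Qn * (e x * ∑ y, A x y)
        + Qn ^ 2 * (e x * e x) := by
      intro x; rw [hd]; ring
    simp only [h1, Finset.sum_add_distrib, ← Finset.mul_sum, hef (fun x => ∑ y, A x y), hee]
    ring

def kelQ {V : Type*} (G : SimpleGraph V) (u v y : V) : Prop := G.Adj v y ∧ ¬ G.Adj u y ∧ y ≠ u

def kel {V : Type*} (G : SimpleGraph V) (u v : V) : SimpleGraph V where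
  Adj x y := (G.Adj x y ∧ ¬ (x = v ∧ kelQ G u v y) ∧ ¬ (y = v ∧ kelQ G u v x)) ∨
    (x = u ∧ kelQ G u v y) ∨ (y = u ∧ kelQ G u v x)
  symm := ⟨by
    intro x y h
    rcases h with ⟨h1, h2, h3⟩ | h | h
    · exact Or.inl ⟨h1.symm, h3, h2⟩
    · exact Or.inr (Or.inr h)
    · exact Or.inr (Or.inl h)⟩
  loopless := ⟨by
    rintro x (⟨h, -⟩ | ⟨h, h'⟩ | ⟨h, h'⟩)
    · exact h.ne rfl
    · exact h'.2.2 h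
    · exact h'.2.2 h⟩

lemma kel_adjR {V : Type*} (G : SimpleGraph V) (u v : V) (huv : u ≠ v) (x y : V) :
    adjR (kel G u v) x y = adjR G x y
      + ((if x = u then 1 else 0) - (if x = v then 1 else 0)) * (if kelQ G u v y then 1 else 0)
      + (if kelQ G u v x then 1 else 0) * ((if y = u then 1 else 0) - (if y = v then 1 else 0)) := by
  have hu : ¬ kelQ G u v u := fun h => h.2.2 rfl
  have hv : ¬ kelQ G u v v := fun h => h.1.ne rfl
  have hq1 : ∀ z, kelQ G u v z → G.Adj v z := fun z h => h.1
  have hq2 : ∀ z, kelQ G u v z → ¬ G.Adj u z := fun z h => h.2.1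
  have e : (kel G u v).Adj x y ↔ (G.Adj x y ∧ ¬ (x = v ∧ kelQ G u v y) ∧
    ¬ (y = v ∧ kelQ G u v x)) ∨ (x = u ∧ kelQ G u v y) ∨ (y = u ∧ kelQ G u v x) := Iff.rfl
  simp only [adjR, e]
  have hxy := G.adj_comm x y
  by_cases hxu : x = u
  · subst hxu
    by_cases h : kelQ G x v y
    · have h2 := hq2 y h
      simp [h, h2, hu, huv]
    · simp [h, hu]
  by_cases hxv : x = v
  · subst hxv
    by_cases h : kelQ G u x y
    · have h2 := hq1 y h
      simp [h, h2, hv, hxu]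
    · simp [h, hv, hxu]
  by_cases h : kelQ G u v x
  · have h1 := hq1 x h
    have h2 := hq2 x h
    rw [G.adj_comm] at h1 h2
    by_cases hyu : y = u
    · subst hyu; simp [hxu, hxv, h, h2, huv]
    by_cases hyv : y = v
    · subst hyv; simp [hxu, hxv, h, h1, hyu]
    simp [hxu, hxv, hyu, hyv]
  · simp [h, hxu, hxv]

lemma kelmans {V : Type*} [Fintype V] (G : SimpleGraph V) (u v a b : V) (huv : u ≠ v)
    (ha : G.Adj u a) (hav : a ≠ v) (ha' : ¬ G.Adj v a)
    (hb : G.Adj v b) (hbu : b ≠ u) (hb' : ¬ G.Adj u b)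
    (hd2 : (∑ y, adjR G v y * ∑ z, adjR G y z) ≤ (∑ y, adjR G u y * ∑ z, adjR G y z)) :
    ∃ G' : SimpleGraph V, tot (adjR G') = tot (adjR G) ∧ wk (adjR G) ≤ wk (adjR G') ∧
      ss (adjR G) < ss (adjR G') := by
  set q : V → ℝ := fun x => if kelQ G u v x then 1 else 0 with hq
  set p : V → ℝ := fun x => if G.Adj u x ∧ ¬ G.Adj v x ∧ x ≠ v then 1 else 0 with hp
  set e : V → ℝ := fun x => (if x = u then 1 else 0) - (if x = v then 1 else 0) with he
  have hq0 : ∀ x, 0 ≤ q x := by intro x; simp only [hq]; split_ifs <;> norm_num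
  have hp0 : ∀ x, 0 ≤ p x := by intro x; simp only [hp]; split_ifs <;> norm_num
  have hQ1 : 1 ≤ ∑ x, q x := by
    calc (1 : ℝ) = q b := by simp [hq, kelQ, hb, hbu, hb']
      _ ≤ _ := Finset.single_le_sum (fun x _ => hq0 x) (Finset.mem_univ b)
  have hP1 : 1 ≤ ∑ x, p x := by
    calc (1 : ℝ) = p a := by simp [hp, ha, hav, ha']
      _ ≤ _ := Finset.single_le_sum (fun x _ => hp0 x) (Finset.mem_univ a)
  have hdiff : (∑ y, adjR G u y) - (∑ y, adjR G v y) = (∑ x, p x) - ∑ x, q x := by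
    have hse : ∑ x, e x = 0 := by simp [he]
    have h1 : ∀ x, adjR G u x - adjR G v x = p x - q x - adjR G u v * e x := by
      intro x
      simp only [hp, hq, he, adjR, kelQ]
      have := G.adj_comm u v
      by_cases h1 : x = u
      · subst h1; simp [huv, this]
      · by_cases h2 : x = v
        · subst h2; simp [h1, this]
        · by_cases h3 : G.Adj u x <;> by_cases h4 : G.Adj v x <;> simp [h1, h2, h3, h4]
    rw [← Finset.sum_sub_distrib, ← Finset.sum_sub_distrib]
    simp only [h1, Finset.sum_sub_distrib, ← Finset.mul_sum, hse]; ring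
  have hkel := kelmans_real (adjR G) (adjR (kel G u v)) q e u v (∑ x, q x)
    ((∑ x, q x * ∑ y, adjR G x y) - (∑ x, q x) * adjR G u v) huv rfl (fun x => rfl)
    (by simp [hq, kelQ]) (by simp [hq, kelQ]) ?_ (adjR_nonneg G) rfl ?_ ?_ hd2
  · refine ⟨kel G u v, hkel.2.1, hkel.1, ?_⟩
    rw [hkel.2.2, hdiff]
    nlinarith
  · exact fun x y => kel_adjR G u v huv x y
  · have : (∑ x, q x) * adjR G u v ≤ ∑ x, q x * ∑ y, adjR G x y := by
      rw [Finset.sum_mul]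
      refine Finset.sum_le_sum fun x _ => ?_
      by_cases hx : kelQ G u v x
      · have : adjR G u v ≤ ∑ y, adjR G x y := by
          calc adjR G u v ≤ 1 := adjR_le_one _ _ _
            _ = adjR G x v := by simp [adjR, hx.1.symm]
            _ ≤ _ := Finset.single_le_sum (fun y _ => adjR_nonneg G x y) (Finset.mem_univ v)
        exact mul_le_mul_of_nonneg_left this (hq0 x)
      · simp [hq, hx]
    linarith
  · intro x
    rw [hdiff]
    generalize ∑ x, q x = Q at *
    generalize ∑ x, p x = R at *
    have h1 := G.adj_comm u v
    have h2 := G.adj_comm u x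
    have h3 := G.adj_comm v x
    simp only [hq, he, adjR, kelQ]
    by_cases hxu : x = u
    · subst hxu; simp [huv]
    by_cases hxv : x = v
    · subst hxv; simp [*]
    by_cases h5 : G.Adj x u <;> by_cases h6 : G.Adj x v <;> simp [*] <;> linarith

lemma exists_threshold {V : Type*} [Fintype V] (G : SimpleGraph V) :
    ∃ G' : SimpleGraph V, tot (adjR G') = tot (adjR G) ∧ wk (adjR G) ≤ wk (adjR G') ∧
      ∀ u v a b, u ≠ v → G'.Adj u a → a ≠ v → ¬ G'.Adj v a → G'.Adj v b → b ≠ u →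
        ¬ G'.Adj u b → False := by
  have : Nonempty {H : SimpleGraph V // tot (adjR H) = tot (adjR G)} := ⟨⟨G, rfl⟩⟩
  obtain ⟨⟨H, hH⟩, hmax⟩ := Finite.exists_max
    (fun H : {H : SimpleGraph V // tot (adjR H) = tot (adjR G)} =>
      toLex (wk (adjR H.1), ss (adjR H.1)))
  have hcon : ∀ K : SimpleGraph V, tot (adjR K) = tot (adjR H) → wk (adjR H) ≤ wk (adjR K) →
      ss (adjR H) < ss (adjR K) → False := by
    intro K h1 h2 h3
    have := hmax ⟨K, h1.trans hH⟩
    rw [Prod.Lex.toLex_le_toLex] at this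
    rcases this with h | h
    · simp at h; linarith
    · simp at h; linarith [h.2]
  refine ⟨H, hH, ?_, ?_⟩
  · have := hmax ⟨G, rfl⟩
    rw [Prod.Lex.toLex_le_toLex] at this
    rcases this with h | h
    · exact h.le
    · exact h.1.le
  · intro u v a b huv ha hav ha' hb hbu hb'
    rcases le_total (∑ y, adjR H v y * ∑ z, adjR H y z) (∑ y, adjR H u y * ∑ z, adjR H y z) with h | h
    · obtain ⟨K, h1, h2, h3⟩ := kelmans H u v a b huv ha hav ha' hb hbu hb' h
      exact hcon K h1 h2 h3
    · obtain ⟨K, h1, h2, h3⟩ := kelmans H v u b a huv.symm hb hbu hb' ha hav ha' h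
      exact hcon K h1 h2 h3

lemma exists_split {V : Type*} [Fintype V] (G : SimpleGraph V)
    (hG : ∀ u v a b, u ≠ v → G.Adj u a → a ≠ v → ¬ G.Adj v a → G.Adj v b → b ≠ u →
        ¬ G.Adj u b → False) :
    ∃ T : Finset V, (∀ x ∈ T, ∀ y ∈ T, x ≠ y → G.Adj x y) ∧
      (∀ x ∉ T, ∀ y ∉ T, ¬ G.Adj x y) := by
  -- a linear key refining the degree
  obtain ⟨κ, hκi, hκ⟩ : ∃ κ : V → ℕ, Function.Injective κ ∧
      ∀ x y, κ x < κ y → G.degree x ≤ G.degree y := by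
    refine ⟨fun x => G.degree x * Fintype.card V + (Fintype.equivFin V x : ℕ), ?_, ?_⟩
    · intro x y h
      have hx := (Fintype.equivFin V x).2
      have hy := (Fintype.equivFin V y).2
      have hpos : 0 < Fintype.card V := lt_of_le_of_lt (Nat.zero_le _) hx
      have h' := congrArg (· % Fintype.card V) h
      simp only [Nat.mul_add_mod_self_right, Nat.mod_eq_of_lt hx, Nat.mod_eq_of_lt hy] at h'
      exact (Fintype.equivFin V).injective (Fin.ext h')
    · intro x y h
      have hx := (Fintype.equivFin V x).2
      have hy := (Fintype.equivFin V y).2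
      by_contra hc
      push Not at hc
      have : (G.degree y + 1) * Fintype.card V ≤ G.degree x * Fintype.card V :=
        Nat.mul_le_mul_right _ hc
      simp only at h
      nlinarith
  -- the vicinal preorder
  have hv : ∀ x y a, κ x < κ y → G.Adj x a → a ≠ y → G.Adj y a := by
    intro x y a hxy hxa hay
    by_contra hya
    have hne : x ≠ y := by rintro rfl; exact lt_irrefl _ hxy
    have hsub : (G.neighborFinset y).erase x ⊆ (G.neighborFinset x).erase y := by
      intro b hb
      simp only [Finset.mem_erase, SimpleGraph.mem_neighborFinset] at hb ⊢
      refine ⟨fun h => ?_, ?_⟩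
      · subst h; exact hb.2.ne rfl
      · by_contra hxb
        exact hG x y a b hne hxa hay hya hb.2 hb.1 hxb
    have hss : (G.neighborFinset y).erase x ⊂ (G.neighborFinset x).erase y := by
      refine Finset.ssubset_iff_subset_ne.2 ⟨hsub, fun h => ?_⟩
      have : a ∈ (G.neighborFinset x).erase y := by simp [hay, hxa]
      rw [← h] at this
      simp at this
      exact hya this.2
    have hc := Finset.card_lt_card hss
    have hdeg := hκ x y hxy
    rw [Finset.card_erase_eq_ite, Finset.card_erase_eq_ite] at hc
    simp only [SimpleGraph.mem_neighborFinset, SimpleGraph.card_neighborFinset_eq_degree,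
      G.adj_comm y x] at hc
    split_ifs at hc <;> omega
  refine ⟨Finset.univ.filter fun x => ∃ y, G.Adj x y ∧ κ y < κ x, ?_, ?_⟩
  · have hw : ∀ x y, κ x < κ y → (∃ z, G.Adj x z ∧ κ z < κ x) → G.Adj x y := by
      rintro x y hxy ⟨z, hxz, hz⟩
      have hzy : z ≠ y := by rintro rfl; omega
      have h1 : G.Adj y z := hv x y z hxy hxz hzy
      have hyx : y ≠ x := by rintro rfl; exact lt_irrefl _ hxy
      exact hv z x y hz h1.symm hyx
    intro x hx y hy hne
    simp only [Finset.mem_filter, Finset.mem_univ, true_and] at hx hy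
    rcases lt_trichotomy (κ x) (κ y) with h | h | h
    · exact hw x y h hx
    · exact absurd (hκi h) hne
    · exact (hw y x h hy).symm
  · intro x hx y hy hxy
    simp only [Finset.mem_filter, Finset.mem_univ, true_and, not_exists, not_and, not_lt] at hx hy
    have h1 := hx y hxy
    have h2 := hy x hxy.symm
    exact hxy.ne (hκi (le_antisymm h1 h2))

end P4

section P4b
open Classical Finset

lemma bip_bound {V : Type*} (T N : Finset V) (B : V → V → ℝ)
    (h01 : ∀ u v, B u v = 0 ∨ B u v = 1) (t m α R P : ℝ) (k w : V → ℝ)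
    (ht : t = T.card) (hm : m = N.card)
    (hk : ∀ v, k v = ∑ u ∈ T, B u v) (hw : ∀ u, w u = ∑ v ∈ N, B u v)
    (hα : α = ∑ u ∈ T, w u) (hR : R = ∑ v ∈ N, k v ^ 2) (hP : P = ∑ u ∈ T, w u ^ 2) :
    (α = ∑ v ∈ N, k v) ∧ 0 ≤ α ∧ α ≤ t * m ∧ R ≤ t * α ∧ P ≤ m * α ∧ 0 ≤ R ∧ 0 ≤ P ∧
      m * R + t * P ≤ α * t * m + α ^ 2 ∧
      (∑ u ∈ T, ∑ v ∈ N, B u v * k v = R) ∧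
      (∑ u ∈ T, (∑ v ∈ N, B u v * k v) ^ 2 ≤ α * R) ∧
      (∑ v ∈ N, k v * ∑ u ∈ T, B u v * w u ≤ α ^ 2) ∧
      (∑ v ∈ N, (∑ u ∈ T, B u v * w u) ^ 2 ≤ α * P) := by
  have hB0 : ∀ u v, 0 ≤ B u v := fun u v => by rcases h01 u v with h | h <;> rw [h] <;> norm_num
  have hB1 : ∀ u v, B u v ≤ 1 := fun u v => by rcases h01 u v with h | h <;> rw [h] <;> norm_num
  have hB2 : ∀ u v, B u v ^ 2 = B u v := fun u v => by rcases h01 u v with h | h <;> rw [h] <;> norm_num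
  have hk0 : ∀ v, 0 ≤ k v := fun v => by rw [hk]; exact sum_nonneg fun u _ => hB0 u v
  have hw0 : ∀ v, 0 ≤ w v := fun v => by rw [hw]; exact sum_nonneg fun u _ => hB0 v u
  have hkt : ∀ v, k v ≤ t := fun v => by
    rw [hk, ht]
    calc ∑ u ∈ T, B u v ≤ ∑ u ∈ T, (1 : ℝ) := sum_le_sum fun u _ => hB1 u v
      _ = _ := by simp
  have hwm : ∀ v, w v ≤ m := fun v => by
    rw [hw, hm]
    calc ∑ u ∈ N, B v u ≤ ∑ u ∈ N, (1 : ℝ) := sum_le_sum fun u _ => hB1 v u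
      _ = _ := by simp
  have hα' : α = ∑ v ∈ N, k v := by
    rw [hα]; simp only [hk, hw]; rw [sum_comm]
  have hα0 : 0 ≤ α := by rw [hα]; exact sum_nonneg fun u _ => hw0 u
  have hy : ∑ u ∈ T, ∑ v ∈ N, B u v * k v = R := by
    rw [sum_comm, hR]
    refine sum_congr rfl fun v _ => ?_
    rw [← sum_mul, ← hk]; ring
  have hz : ∑ v ∈ N, ∑ u ∈ T, B u v * w u = P := by
    rw [sum_comm, hP]
    refine sum_congr rfl fun v _ => ?_
    rw [← sum_mul, ← hw]; ring
  have hyα : ∀ u, ∑ v ∈ N, B u v * k v ≤ α := fun u => by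
    rw [hα']
    exact sum_le_sum fun v _ => by nlinarith [hB1 u v, hk0 v]
  have hzα : ∀ v, ∑ u ∈ T, B u v * w u ≤ α := fun v => by
    rw [hα]
    exact sum_le_sum fun u _ => by nlinarith [hB1 u v, hw0 u]
  have hy0 : ∀ u, 0 ≤ ∑ v ∈ N, B u v * k v := fun u =>
    sum_nonneg fun v _ => mul_nonneg (hB0 u v) (hk0 v)
  have hz0 : ∀ v, 0 ≤ ∑ u ∈ T, B u v * w u := fun v =>
    sum_nonneg fun u _ => mul_nonneg (hB0 u v) (hw0 u)
  have ht0 : 0 ≤ t := by rw [ht]; positivity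
  have hm0 : 0 ≤ m := by rw [hm]; positivity
  refine ⟨hα', hα0, ?_, ?_, ?_, ?_, ?_, ?_, hy, ?_, ?_, ?_⟩
  · rw [hα, ht, ← nsmul_eq_mul]; exact sum_le_card_nsmul _ _ _ fun u _ => hwm u
  · rw [hR, hα', mul_sum]
    exact sum_le_sum fun v _ => by nlinarith [hk0 v, hkt v]
  · rw [hP, hα, mul_sum]
    exact sum_le_sum fun v _ => by nlinarith [hw0 v, hwm v]
  · rw [hR]; positivity
  · rw [hP]; positivity
  · -- variance inequality
    have h1 : ∀ u, (t * w u - α) ^ 2 ≤ m * ∑ v ∈ N, (t * B u v - k v) ^ 2 := by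
      intro u
      have : t * w u - α = ∑ v ∈ N, (t * B u v - k v) := by
        rw [sum_sub_distrib, ← mul_sum, ← hw, hα']
      rw [this, hm]
      exact sq_sum_le_card_mul_sum_sq
    have h2 := sum_le_sum (fun u (_ : u ∈ T) => h1 u)
    have h3 : ∑ u ∈ T, (t * w u - α) ^ 2 = t * (t * P - α ^ 2) := by
      have : ∀ u, (t * w u - α) ^ 2 = t ^ 2 * w u ^ 2 - 2 * t * α * w u + α ^ 2 := fun u => by ring
      simp only [this, sum_add_distrib, sum_sub_distrib, ← mul_sum, ← hα, ← hP, sum_const,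
        nsmul_eq_mul, ← ht]
      ring
    have h4 : ∑ u ∈ T, m * ∑ v ∈ N, (t * B u v - k v) ^ 2 = m * (t * (t * α - R)) := by
      rw [← mul_sum, sum_comm]
      congr 1
      have : ∀ v, ∑ u ∈ T, (t * B u v - k v) ^ 2 = t ^ 2 * k v - t * k v ^ 2 := by
        intro v
        have : ∀ u, (t * B u v - k v) ^ 2 = t ^ 2 * B u v - 2 * t * k v * B u v + k v ^ 2 :=
          fun u => by rw [sub_sq, mul_pow, hB2]; ring
        simp only [this, sum_add_distrib, sum_sub_distrib, ← mul_sum, ← hk, sum_const,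
          nsmul_eq_mul, ← ht]
        ring
      simp only [this, sum_sub_distrib, ← mul_sum, ← hα', ← hR]
      ring
    rw [h3, h4] at h2
    rcases ht0.eq_or_lt with h | h
    · have hT : T = ∅ := by
        rw [← h] at ht
        have : T.card = 0 := by exact_mod_cast ht.symm
        exact card_eq_zero.1 this
      have hR0 : R = 0 := by rw [← hy, hT]; simp
      rw [hR0, ← h]; nlinarith [sq_nonneg α]
    · have : t * (t * P - α ^ 2) ≤ t * (m * (t * α - R)) := by linarith
      have := le_of_mul_le_mul_left this h
      linarith
  · calc ∑ u ∈ T, (∑ v ∈ N, B u v * k v) ^ 2 ≤ ∑ u ∈ T, α * (∑ v ∈ N, B u v * k v) :=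
        sum_le_sum fun u _ => by nlinarith [hyα u, hy0 u]
      _ = α * R := by rw [← mul_sum, hy]
  · calc ∑ v ∈ N, k v * ∑ u ∈ T, B u v * w u ≤ ∑ v ∈ N, k v * α :=
        sum_le_sum fun v _ => mul_le_mul_of_nonneg_left (hzα v) (hk0 v)
      _ = α ^ 2 := by rw [← sum_mul, ← hα']; ring
  · calc ∑ v ∈ N, (∑ u ∈ T, B u v * w u) ^ 2 ≤ ∑ v ∈ N, α * (∑ u ∈ T, B u v * w u) :=
        sum_le_sum fun v _ => by nlinarith [hzα v, hz0 v]
      _ = α * P := by rw [← mul_sum, hz]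

lemma split_bound {V : Type*} [Fintype V] (A : V → V → ℝ) (T : Finset V)
    (h01 : ∀ u v, A u v = 0 ∨ A u v = 1) (hsymm : ∀ u v, A u v = A v u)
    (hTT : ∀ u ∈ T, ∀ v ∈ T, A u v = 1) (hNN : ∀ u ∉ T, ∀ v ∉ T, A u v = 0) :
    ∃ m α R P : ℝ, (T.card : ℝ) + m = Fintype.card V ∧ 0 ≤ m ∧
      0 ≤ α ∧ α ≤ T.card * m ∧ R ≤ T.card * α ∧ P ≤ m * α ∧ 0 ≤ R ∧ 0 ≤ P ∧
      m * R + T.card * P ≤ α * T.card * m + α ^ 2 ∧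
      tot A = (T.card : ℝ) ^ 2 + 2 * α ∧
      wk A ≤ T.card * ((T.card : ℝ) ^ 2 + α) ^ 2 + 2 * T.card * α ^ 2
        + 3 * ((T.card : ℝ) ^ 2 + α) * R + α * P := by
  set t : ℝ := (T.card : ℝ) with ht
  set k : V → ℝ := fun v => ∑ u ∈ T, A u v with hk
  set w : V → ℝ := fun u => ∑ v ∈ Tᶜ, A u v with hw
  obtain ⟨hα', hα0, b1, b2, b3, b4, b5, b6, b7, b8, b9, b10⟩ := bip_bound T Tᶜ A h01 t (Tᶜ.card) (∑ u ∈ T, w u)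
    (∑ v ∈ Tᶜ, k v ^ 2) (∑ u ∈ T, w u ^ 2) k w ht rfl (fun _ => rfl) (fun _ => rfl) rfl rfl rfl
  set α := ∑ u ∈ T, w u
  set R := ∑ v ∈ Tᶜ, k v ^ 2
  set P := ∑ u ∈ T, w u ^ 2
  have hsplit : ∀ f : V → ℝ, ∑ x, f x = ∑ x ∈ T, f x + ∑ x ∈ Tᶜ, f x := fun f =>
    (sum_add_sum_compl T f).symm
  have hdT : ∀ u ∈ T, ∑ y, A u y = t + w u := by
    intro u hu
    rw [hsplit, sum_congr rfl (fun y hy => hTT u hu y hy)]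
    simp [hw, ht]
  have hdN : ∀ v ∈ Tᶜ, ∑ y, A v y = k v := by
    intro v hv
    rw [hsplit, sum_congr (s₁ := Tᶜ) rfl (fun y hy => hNN v (mem_compl.1 hv) y (mem_compl.1 hy))]
    simp only [hk, sum_const_zero, add_zero]
    exact sum_congr rfl fun y _ => hsymm v y
  have hsT : ∑ u ∈ T, (t + w u) = t ^ 2 + α := by
    rw [sum_add_distrib, sum_const, nsmul_eq_mul, ← ht]; ring
  have hd2T : ∀ u ∈ T, ∑ y, A u y * ∑ z, A y z = t ^ 2 + α + ∑ v ∈ Tᶜ, A u v * k v := by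
    intro u hu
    rw [hsplit, ← hsT]
    congr 1
    · exact sum_congr rfl fun y hy => by rw [hTT u hu y hy, hdT y hy, one_mul]
    · exact sum_congr rfl fun y hy => by rw [hdN y hy]
  have hd2N : ∀ v ∈ Tᶜ, ∑ y, A v y * ∑ z, A y z = t * k v + ∑ u ∈ T, A u v * w u := by
    intro v hv
    have h1 : ∑ y ∈ T, A v y * ∑ z, A y z = t * k v + ∑ u ∈ T, A u v * w u := by
      simp only [hk, mul_sum]
      rw [← sum_add_distrib]
      refine sum_congr rfl fun y hy => ?_
      rw [← mul_sum, hdT y hy, hsymm v y]; ring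
    have h2 : ∑ y ∈ Tᶜ, A v y * ∑ z, A y z = 0 :=
      sum_eq_zero fun y hy => by rw [hNN v (mem_compl.1 hv) y (mem_compl.1 hy), zero_mul]
    rw [hsplit, h1, h2, add_zero]
  refine ⟨(Tᶜ.card : ℝ), α, R, P, ?_, by positivity, hα0, b1, b2, b3, b4, b5, b6, ?_, ?_⟩
  · rw [ht]; exact_mod_cast card_add_card_compl T
  · unfold tot
    rw [hsplit, sum_congr rfl hdT, sum_congr rfl hdN, hsT, ← hα']; ring
  · unfold wk
    rw [hsplit]
    have e1 : ∑ x ∈ T, (∑ y, A x y * ∑ z, A y z) ^ 2 = t * (t ^ 2 + α) ^ 2 + 2 * (t ^ 2 + α) * R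
        + ∑ u ∈ T, (∑ v ∈ Tᶜ, A u v * k v) ^ 2 := by
      rw [sum_congr rfl (fun u hu => by rw [hd2T u hu])]
      simp only [add_sq (t ^ 2 + α), sum_add_distrib, ← mul_sum, b7, sum_const, nsmul_eq_mul, ← ht]
    have e2 : ∑ x ∈ Tᶜ, (∑ y, A x y * ∑ z, A y z) ^ 2 = t ^ 2 * R
        + 2 * t * (∑ v ∈ Tᶜ, k v * ∑ u ∈ T, A u v * w u)
        + ∑ v ∈ Tᶜ, (∑ u ∈ T, A u v * w u) ^ 2 := by
      rw [sum_congr rfl (fun u hu => by rw [hd2N u hu])]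
      have : ∀ v, (t * k v + ∑ u ∈ T, A u v * w u) ^ 2 = t ^ 2 * k v ^ 2
        + 2 * t * (k v * ∑ u ∈ T, A u v * w u) + (∑ u ∈ T, A u v * w u) ^ 2 := fun v => by ring
      rw [sum_congr rfl fun v _ => this v, sum_add_distrib, sum_add_distrib, ← mul_sum, ← mul_sum]
    rw [e1, e2]
    have ht0 : 0 ≤ t := by rw [ht]; positivity
    nlinarith [mul_le_mul_of_nonneg_left b9 ht0]

end P4b

section P4c

set_option maxHeartbeats 2000000 in
lemma bern_core (x w p q t : ℝ) (hx : 0 ≤ x) (hw : 0 ≤ w) (hp : 0 ≤ p) (hq : 0 ≤ q)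
    (hxt : x = 1 - t) (hwt : w = 5 * t - 1) (hpq : q = 1 - p) :
    (t * (t + x * p) ^ 2 + x * p ^ 2 * (1 + 2 * t ^ 2 + 3 * t * x * p)) ^ 2
      ≤ t * (t + 2 * x * p) ^ 5 := by
  have key : t * (t + 2 * x * p) ^ 5
      - (t * (t + x * p) ^ 2 + x * p ^ 2 * (1 + 2 * t ^ 2 + 3 * t * x * p)) ^ 2
      = x * p * (3/512 * x ^ 0 * w ^ 5 * q ^ 1 * p ^ 4
      + 3/128 * x ^ 0 * w ^ 5 * q ^ 2 * p ^ 3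
      + 9/256 * x ^ 0 * w ^ 5 * q ^ 3 * p ^ 2
      + 3/128 * x ^ 0 * w ^ 5 * q ^ 4 * p ^ 1
      + 3/512 * x ^ 0 * w ^ 5 * q ^ 5 * p ^ 0
      + 3/256 * x ^ 1 * w ^ 4 * q ^ 0 * p ^ 5
      + 111/512 * x ^ 1 * w ^ 4 * q ^ 1 * p ^ 4
      + 147/256 * x ^ 1 * w ^ 4 * q ^ 2 * p ^ 3
      + 147/256 * x ^ 1 * w ^ 4 * q ^ 3 * p ^ 2
      + 15/64 * x ^ 1 * w ^ 4 * q ^ 4 * p ^ 1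
      + 15/512 * x ^ 1 * w ^ 4 * q ^ 5 * p ^ 0
      + 21/64 * x ^ 2 * w ^ 3 * q ^ 0 * p ^ 5
      + 679/256 * x ^ 2 * w ^ 3 * q ^ 1 * p ^ 4
      + 147/32 * x ^ 2 * w ^ 3 * q ^ 2 * p ^ 3
      + 369/128 * x ^ 2 * w ^ 3 * q ^ 3 * p ^ 2
      + 43/64 * x ^ 2 * w ^ 3 * q ^ 4 * p ^ 1
      + 15/256 * x ^ 2 * w ^ 3 * q ^ 5 * p ^ 0
      + 389/128 * x ^ 3 * w ^ 2 * q ^ 0 * p ^ 5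
      + 3319/256 * x ^ 3 * w ^ 2 * q ^ 1 * p ^ 4
      + 1777/128 * x ^ 3 * w ^ 2 * q ^ 2 * p ^ 3
      + 679/128 * x ^ 3 * w ^ 2 * q ^ 3 * p ^ 2
      + 27/32 * x ^ 3 * w ^ 2 * q ^ 4 * p ^ 1
      + 15/256 * x ^ 3 * w ^ 2 * q ^ 5 * p ^ 0
      + 649/64 * x ^ 4 * w ^ 1 * q ^ 0 * p ^ 5
      + 11423/512 * x ^ 4 * w ^ 1 * q ^ 1 * p ^ 4
      + 1877/128 * x ^ 4 * w ^ 1 * q ^ 2 * p ^ 3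
      + 1045/256 * x ^ 4 * w ^ 1 * q ^ 3 * p ^ 2
      + 63/128 * x ^ 4 * w ^ 1 * q ^ 4 * p ^ 1
      + 15/512 * x ^ 4 * w ^ 1 * q ^ 5 * p ^ 0
      + 1643/256 * x ^ 5 * w ^ 0 * q ^ 0 * p ^ 5
      + 5011/512 * x ^ 5 * w ^ 0 * q ^ 1 * p ^ 4
      + 979/256 * x ^ 5 * w ^ 0 * q ^ 2 * p ^ 3
      + 287/256 * x ^ 5 * w ^ 0 * q ^ 3 * p ^ 2
      + 7/64 * x ^ 5 * w ^ 0 * q ^ 4 * p ^ 1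
      + 3/512 * x ^ 5 * w ^ 0 * q ^ 5 * p ^ 0) := by
    subst hxt hwt hpq
    ring
  refine sub_nonneg.1 ?_
  rw [key]
  positivity

lemma phi1_bound (t a r c : ℝ) (ht : 0 < t) (ha : 0 ≤ a) (hat : a ≤ t) (htr : t ≤ r)
    (hr : r ^ 2 = c) (hca : c = 2 * a - a ^ 2) :
    t * c ^ 2 + (c - t ^ 2) / 2 * ((c + t ^ 2) / 2) ^ 2 / t
      ≤ max (a * c ^ 2 + (1 - a) * a ^ 2) (r ^ 5) := by
  have hr0 : 0 < r := lt_of_lt_of_le ht htr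
  have hc0 : 0 < c := by rw [← hr]; positivity
  have ha0 : 0 < a := by
    rcases ha.eq_or_lt with h | h
    · rw [← h] at hca; linarith
    · exact h
  have e1 : t * c ^ 2 + (c - t ^ 2) / 2 * ((c + t ^ 2) / 2) ^ 2 / t
      = (c ^ 3 + 9 * c ^ 2 * t ^ 2 - c * t ^ 4 - t ^ 6) / (8 * t) := by
    field_simp; ring
  rw [e1]
  rcases le_total (r / 3) t with h | h
  · refine le_max_of_le_right ?_
    rw [div_le_iff₀ (by positivity), ← hr]
    have h1 : 0 ≤ (t - r) ^ 2 * (t ^ 4 + 2 * t ^ 3 * r + 4 * t ^ 2 * r ^ 2 + (6 * t - r) * r ^ 3) := by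
      have : 0 ≤ 6 * t - r := by linarith
      positivity
    nlinarith [h1]
  · refine le_max_of_le_left ?_
    have e2 : a * c ^ 2 + (1 - a) * a ^ 2
        = (c ^ 3 + 9 * c ^ 2 * a ^ 2 - c * a ^ 4 - a ^ 6) / (8 * a) := by
      rw [hca]; field_simp; ring
    rw [e2, div_le_div_iff₀ (by positivity) (by positivity)]
    have h9 : 9 * (a * t) ≤ c := by
      have : a * t ≤ t * t := mul_le_mul_of_nonneg_right hat ht.le
      have : t * t ≤ (r / 3) * (r / 3) := mul_le_mul h h ht.le (by positivity)
      nlinarith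
    have k1 : 0 ≤ (t - a) * (c ^ 2 * (c - 9 * (a * t))) :=
      mul_nonneg (by linarith) (mul_nonneg (by positivity) (by linarith))
    have k2 : 0 ≤ c * (a * t) * (t ^ 3 - a ^ 3) :=
      mul_nonneg (by positivity) (sub_nonneg.2 (pow_le_pow_left₀ ha hat 3))
    have k3 : 0 ≤ (a * t) * (t ^ 5 - a ^ 5) :=
      mul_nonneg (by positivity) (sub_nonneg.2 (pow_le_pow_left₀ ha hat 5))
    nlinarith [k1, k2, k3]

lemma phi2_large (t α r c : ℝ) (ht : 1 / 5 ≤ t) (ht1 : t < 1) (hα : 0 ≤ α) (hαt : α ≤ t * (1 - t))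
    (hc : c = t ^ 2 + 2 * α) (hr : 0 ≤ r) (hrc : r ^ 2 = c) :
    t * (t ^ 2 + α) ^ 2 + α ^ 2 / (1 - t) * (1 + 2 * t ^ 2 + 3 * α) ≤ r ^ 5 := by
  have hu : 0 < 1 - t := by linarith
  have ht0 : 0 < t := by linarith
  obtain ⟨p, hp⟩ : ∃ p, p = α / (t * (1 - t)) := ⟨_, rfl⟩
  have hαp : α = t * (1 - t) * p := by rw [hp]; field_simp
  have hp0 : 0 ≤ p := by rw [hp]; positivity
  have hp1 : p ≤ 1 := by rw [hp]; exact div_le_one_of_le₀ hαt (by positivity)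
  have hb := bern_core (1 - t) (5 * t - 1) p (1 - p) t hu.le (by linarith) hp0 (by linarith) rfl rfl rfl
  have e1 : t * (t ^ 2 + α) ^ 2 + α ^ 2 / (1 - t) * (1 + 2 * t ^ 2 + 3 * α)
      = t ^ 2 * (t * (t + (1 - t) * p) ^ 2 + (1 - t) * p ^ 2 * (1 + 2 * t ^ 2 + 3 * t * (1 - t) * p)) := by
    rw [hαp]; field_simp
  rw [e1]
  refine le_of_sq_le_sq ?_ (by positivity)
  have e2 : (r ^ 5) ^ 2 = t ^ 4 * (t * (t + 2 * (1 - t) * p) ^ 5) := by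
    have : (r ^ 5) ^ 2 = (r ^ 2) ^ 5 := by ring
    rw [this, hrc, hc, hαp]; ring
  rw [e2, mul_pow, ← pow_mul]
  exact mul_le_mul_of_nonneg_left hb (by positivity)

lemma phi2_small (t a α c : ℝ) (ht0 : 0 ≤ t) (ht : t ≤ 1 / 5) (ha : 0 ≤ a) (hat : a ≤ t)
    (hα : 0 ≤ α) (hc : c = t ^ 2 + 2 * α) (hca : c = 2 * a - a ^ 2) :
    t * (t ^ 2 + α) ^ 2 + α ^ 2 / (1 - t) * (1 + 2 * t ^ 2 + 3 * α)
      ≤ a * c ^ 2 + (1 - a) * a ^ 2 := by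
  have hu : 0 < 1 - t := by linarith
  have hα' : α = (2 * a - a ^ 2 - t ^ 2) / 2 := by linarith
  obtain ⟨h, hh⟩ : ∃ h, h = t - a := ⟨_, rfl⟩
  have hh0 : 0 ≤ h := by linarith
  have h2 : h ^ 2 ≤ 2 * a * (1 - t) := by rw [hh]; nlinarith
  have hK : 0 ≤ a - (3/2)*a^2 + (1/2)*a^4 - 2*a*h + a^2*h + a^3*h - h^2/4 - a*h^2/2 + (3/2)*a^2*h^2
      - h^3/4 + (3/4)*a*h^3 + h^4/8 := by
    have k1 : h ^ 2 / 4 * (1 + 2 * a + h) ≤ a * (1 - 3 / 2 * a - 2 * h) := by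
      have k2 : h ^ 2 / 4 * (1 + 2 * a + h) ≤ 2 * a * (1 - t) / 4 * (1 + 2 * a + h) := by gcongr
      have k3 : 0 ≤ a * (1 / 2 - 2 * t + t ^ 2 / 2 + a * t / 2) :=
        mul_nonneg ha (by nlinarith [mul_nonneg ha ht0])
      have e : h = t - a := hh
      rw [e] at k2 ⊢
      nlinarith [k2, k3]
    have k4 : 0 ≤ (1/2)*a^4 + a^2*h + a^3*h + (3/2)*a^2*h^2 + (3/4)*a*h^3 + h^4/8 := by positivity
    nlinarith [k1, k4]
  have hmain : (1 - t) * (a * c ^ 2 + (1 - a) * a ^ 2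
      - (t * (t ^ 2 + α) ^ 2 + α ^ 2 / (1 - t) * (1 + 2 * t ^ 2 + 3 * α)))
      = h ^ 2 * (a - (3/2)*a^2 + (1/2)*a^4 - 2*a*h + a^2*h + a^3*h - h^2/4 - a*h^2/2 + (3/2)*a^2*h^2
      - h^3/4 + (3/4)*a*h^3 + h^4/8) := by
    rw [hα', hca, hh]; field_simp; ring
  have := nonneg_of_mul_nonneg_right (hmain ▸ mul_nonneg (sq_nonneg h) hK) hu
  linarith

lemma analytic_bound (t α R P c s r : ℝ) (ht0 : 0 ≤ t) (ht1 : t ≤ 1) (hα : 0 ≤ α)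
    (hαt : α ≤ t * (1 - t)) (hR : R ≤ t * α) (hP : P ≤ (1 - t) * α)
    (hRP : (1 - t) * R + t * P ≤ α * t * (1 - t) + α ^ 2)
    (hc : c = t ^ 2 + 2 * α) (hs : 0 ≤ s) (hsc : s ^ 2 = 1 - c) (hr : 0 ≤ r) (hrc : r ^ 2 = c) :
    t * (t ^ 2 + α) ^ 2 + 2 * t * α ^ 2 + 3 * (t ^ 2 + α) * R + α * P
      ≤ max ((1 - s) ^ 2 * ((c + 1) * s + c)) (r ^ 5) := by
  rcases ht0.eq_or_lt with h | h
  · subst h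
    have h0 : α = 0 := by linarith
    subst h0
    refine le_max_of_le_right ?_
    have : 0 ≤ r ^ 5 := by positivity
    simpa using this
  rcases ht1.eq_or_lt with h1 | h1
  · subst h1
    have h0 : α = 0 := by linarith
    subst h0
    have hr1 : r = 1 := by
      have : r ^ 2 = 1 := by rw [hrc, hc]; ring
      nlinarith
    refine le_max_of_le_right ?_
    rw [hr1]; nlinarith
  have hu : 0 < 1 - t := by linarith
  obtain ⟨a, ha⟩ : ∃ a, a = 1 - s := ⟨_, rfl⟩
  have hca : c = 2 * a - a ^ 2 := by rw [ha]; nlinarith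
  have hS : (1 - s) ^ 2 * ((c + 1) * s + c) = a * c ^ 2 + (1 - a) * a ^ 2 := by
    rw [hca, ha]; ring
  have hs1 : s ≤ 1 := by nlinarith
  have ha0 : 0 ≤ a := by linarith
  have hat : a ≤ t := by
    have : 1 - t ≤ s := by
      refine le_of_sq_le_sq ?_ hs
      nlinarith
    linarith
  have htr : t ≤ r := le_of_sq_le_sq (by nlinarith) hr
  rw [hS]
  have hα2 : α = (c - t ^ 2) / 2 := by linarith
  have hb2 : t ^ 2 + α = (c + t ^ 2) / 2 := by linarith
  rcases le_total (α * (1 - t)) (3 * (t ^ 2 + α) * t) with h3 | h3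
  · have hp := phi1_bound t a r c h ha0 hat htr hrc hca
    refine le_trans ?_ hp
    rw [← hα2, ← hb2]
    have e : t * c ^ 2 + α * (t ^ 2 + α) ^ 2 / t = t * (t ^ 2 + α) ^ 2 + 2 * t * α ^ 2 +
        (α * (α * t * (1 - t) + α ^ 2) + (3 * (t ^ 2 + α) * t - α * (1 - t)) * (t * α)) / t := by
      rw [hc]; field_simp; ring
    rw [e]
    have : 3 * (t ^ 2 + α) * R + α * P
        ≤ (α * (α * t * (1 - t) + α ^ 2) + (3 * (t ^ 2 + α) * t - α * (1 - t)) * (t * α)) / t := by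
      rw [le_div_iff₀ h]
      have g1 := mul_le_mul_of_nonneg_left hRP hα
      have g2 := mul_le_mul_of_nonneg_left hR (sub_nonneg.2 h3)
      nlinarith [g1, g2]
    linarith
  · have hle : t * (t ^ 2 + α) ^ 2 + 2 * t * α ^ 2 + 3 * (t ^ 2 + α) * R + α * P
        ≤ t * (t ^ 2 + α) ^ 2 + α ^ 2 / (1 - t) * (1 + 2 * t ^ 2 + 3 * α) := by
      have e : t * (t ^ 2 + α) ^ 2 + α ^ 2 / (1 - t) * (1 + 2 * t ^ 2 + 3 * α)
          = t * (t ^ 2 + α) ^ 2 + 2 * t * α ^ 2 +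
          (3 * (t ^ 2 + α) * (α * t * (1 - t) + α ^ 2)
            + (α * (1 - t) - 3 * (t ^ 2 + α) * t) * ((1 - t) * α)) / (1 - t) := by
        field_simp; ring
      rw [e]
      have : 3 * (t ^ 2 + α) * R + α * P
          ≤ (3 * (t ^ 2 + α) * (α * t * (1 - t) + α ^ 2)
            + (α * (1 - t) - 3 * (t ^ 2 + α) * t) * ((1 - t) * α)) / (1 - t) := by
        rw [le_div_iff₀ hu]
        have g1 := mul_le_mul_of_nonneg_left hRP (show 0 ≤ 3 * (t ^ 2 + α) by positivity)
        have g2 := mul_le_mul_of_nonneg_left hP (sub_nonneg.2 h3)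
        nlinarith [g1, g2]
      linarith
    refine hle.trans ?_
    rcases le_total (1 / 5) t with h5 | h5
    · exact le_max_of_le_right (phi2_large t α r c h5 h1 hα hαt hc hr hrc)
    · exact le_max_of_le_left (phi2_small t a α c ht0 h5 ha0 hat hα hc hca)

end P4c

section P4d
open Classical Finset

noncomputable def bndF (c : ℝ) : ℝ :=
  max ((1 - Real.sqrt (1 - c)) ^ 2 * ((c + 1) * Real.sqrt (1 - c) + c)) (c ^ ((5 : ℝ) / 2))

lemma bndF_cont : Continuous bndF := by
  unfold bndF
  refine Continuous.max (by fun_prop) ?_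
  exact Real.continuous_rpow_const (by norm_num)

lemma rpow_five_half (c : ℝ) (hc : 0 ≤ c) : c ^ ((5 : ℝ) / 2) = Real.sqrt c ^ 5 := by
  rw [Real.sqrt_eq_rpow, ← Real.rpow_natCast, ← Real.rpow_mul hc]
  norm_num

lemma wk_mono {V : Type*} [Fintype V] (A B : V → V → ℝ) (h0 : ∀ u v, 0 ≤ A u v)
    (h : ∀ u v, A u v ≤ B u v) : wk A ≤ wk B := by
  unfold wk
  refine sum_le_sum fun x _ => ?_
  have hA : ∀ y, 0 ≤ ∑ z, A y z := fun y => sum_nonneg fun z _ => h0 y z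
  have hAB : ∀ y, ∑ z, A y z ≤ ∑ z, B y z := fun y => sum_le_sum fun z _ => h y z
  refine pow_le_pow_left₀ (sum_nonneg fun y _ => mul_nonneg (h0 x y) (hA y)) ?_ 2
  exact sum_le_sum fun y _ => mul_le_mul (h x y) (hAB y) (hA y) ((h0 x y).trans (h x y))

lemma graph_bound {V : Type*} [Fintype V] (G : SimpleGraph V) (M : ℝ) (hM : M = Fintype.card V)
    (hM0 : 0 < M) : ∃ c', tot (adjR G) / M ^ 2 ≤ c' ∧ c' ≤ tot (adjR G) / M ^ 2 + 1 / M ∧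
      wk (adjR G) ≤ bndF c' * M ^ 5 := by
  obtain ⟨G', htot, hwk, hthr⟩ := exists_threshold G
  obtain ⟨T, hT1, hT2⟩ := exists_split G' hthr
  set A : V → V → ℝ := fun u v => if u ∈ T ∧ v ∈ T then 1 else adjR G' u v with hA
  have h01 : ∀ u v, A u v = 0 ∨ A u v = 1 := by
    intro u v
    simp only [hA, adjR]
    split_ifs <;> simp
  have hge : ∀ u v, adjR G' u v ≤ A u v := by
    intro u v
    simp only [hA]
    split_ifs
    · exact adjR_le_one G' u v
    · exact le_rfl
  have hsymm : ∀ u v, A u v = A v u := by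
    intro u v
    simp only [hA, adjR_symm G' u v, and_comm]
  have hTT : ∀ u ∈ T, ∀ v ∈ T, A u v = 1 := by
    intro u hu v hv; simp [hA, hu, hv]
  have hNN : ∀ u ∉ T, ∀ v ∉ T, A u v = 0 := by
    intro u hu v hv; simp [hA, hu, adjR, hT2 u hu v hv]
  have htotA : tot A = tot (adjR G') + T.card := by
    have : ∀ u v, A u v = adjR G' u v + if u = v then (if u ∈ T then 1 else 0) else 0 := by
      intro u v
      by_cases huv : u = v
      · subst huv
        by_cases hu : u ∈ T <;> simp [hA, hu, adjR_self]
      · by_cases hu : u ∈ T <;> by_cases hv : v ∈ T <;> simp [hA, hu, hv, huv]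
        simp [adjR, hT1 u hu v hv huv]
    unfold tot
    simp only [this, sum_add_distrib]
    simp
  obtain ⟨m, α, R, P, e1, m0, α0, b1, b2, b3, b4, b5, b6, e2, e3⟩ :=
    split_bound A T h01 hsymm hTT hNN
  have hwk2 : wk (adjR G) ≤ wk A := hwk.trans (wk_mono _ _ (adjR_nonneg G') hge)
  set t : ℝ := (T.card : ℝ) with ht
  have ht0 : 0 ≤ t := by rw [ht]; positivity
  rw [← hM] at e1
  have htM : t ≤ M := by linarith
  have hm : m = M - t := by linarith
  subst hm
  have hM2 : M ≠ 0 := hM0.ne'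
  have hb1 : α / M ^ 2 ≤ t / M * (1 - t / M) := by
    have : t / M * (1 - t / M) = t * (M - t) / M ^ 2 := by field_simp
    rw [this]; gcongr
  have ht1 : t / M ≤ 1 := div_le_one_of_le₀ htM hM0.le
  have hc : tot A / M ^ 2 = (t / M) ^ 2 + 2 * (α / M ^ 2) := by
    rw [e2]; field_simp
  have hc0 : 0 ≤ tot A / M ^ 2 := by rw [hc]; positivity
  have hc1 : tot A / M ^ 2 ≤ 1 := by rw [hc]; nlinarith [sq_nonneg (t / M - 1)]
  refine ⟨tot A / M ^ 2, ?_, ?_, ?_⟩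
  · rw [htotA, htot]; gcongr; linarith
  · rw [htotA, htot, add_div]
    have : t / M ^ 2 = t / M / M := by field_simp
    rw [this]; gcongr
  · have han := analytic_bound (t / M) (α / M ^ 2) (R / M ^ 3) (P / M ^ 3) (tot A / M ^ 2)
      (Real.sqrt (1 - tot A / M ^ 2)) (Real.sqrt (tot A / M ^ 2)) (by positivity) ht1
      (by positivity) hb1
      (by
        have : t / M * (α / M ^ 2) = t * α / M ^ 3 := by field_simp
        rw [this]; gcongr)
      (by
        have : (1 - t / M) * (α / M ^ 2) = (M - t) * α / M ^ 3 := by field_simp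
        rw [this]; gcongr)
      (by
        have h1 : (1 - t / M) * (R / M ^ 3) + t / M * (P / M ^ 3)
          = ((M - t) * R + t * P) / M ^ 4 := by field_simp
        have h2 : α / M ^ 2 * (t / M) * (1 - t / M) + (α / M ^ 2) ^ 2
          = (α * t * (M - t) + α ^ 2) / M ^ 4 := by field_simp
        rw [h1, h2]; gcongr)
      hc (Real.sqrt_nonneg _) (Real.sq_sqrt (by linarith)) (Real.sqrt_nonneg _) (Real.sq_sqrt hc0)
    unfold bndF
    rw [rpow_five_half _ hc0]
    have h3 := mul_le_mul_of_nonneg_right han (show 0 ≤ M ^ 5 by positivity)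
    refine (hwk2.trans e3).trans (le_trans (le_of_eq ?_) h3)
    field_simp

lemma wk_blow {V : Type*} [Fintype V] (G : SimpleGraph V) (N : ℕ) :
    wk (adjR (G.comap (Prod.fst : V × Fin N → V))) = (N : ℝ) ^ 5 * wk (adjR G) := by
  have h : ∀ x y : V × Fin N, adjR (G.comap (Prod.fst : V × Fin N → V)) x y = adjR G x.1 y.1 :=
    fun x y => rfl
  unfold wk
  simp only [h, Fintype.sum_prod_type, sum_const, card_univ, Fintype.card_fin, nsmul_eq_mul,
    mul_sum]
  refine sum_congr rfl fun x _ => ?_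
  simp only [mul_left_comm _ (N : ℝ), ← mul_sum]
  ring

lemma tot_blow {V : Type*} [Fintype V] (G : SimpleGraph V) (N : ℕ) :
    tot (adjR (G.comap (Prod.fst : V × Fin N → V))) = (N : ℝ) ^ 2 * tot (adjR G) := by
  have h : ∀ x y : V × Fin N, adjR (G.comap (Prod.fst : V × Fin N → V)) x y = adjR G x.1 y.1 :=
    fun x y => rfl
  unfold tot
  simp only [h, Fintype.sum_prod_type, sum_const, card_univ, Fintype.card_fin, nsmul_eq_mul,
    mul_sum]
  refine sum_congr rfl fun x _ => sum_congr rfl fun y _ => ?_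
  ring

lemma walk_bound {V : Type*} [Fintype V] (G : SimpleGraph V) (n : ℝ) (hn : n = Fintype.card V)
    (hn0 : 0 < n) : wk (adjR G) ≤ bndF (tot (adjR G) / n ^ 2) * n ^ 5 := by
  have hstep : ∀ k : ℕ, ∃ c', tot (adjR G) / n ^ 2 ≤ c' ∧
      c' ≤ tot (adjR G) / n ^ 2 + 1 / n * (1 / ((k : ℝ) + 1)) ∧
      wk (adjR G) ≤ bndF c' * n ^ 5 := by
    intro k
    have hk : (0 : ℝ) < (k : ℝ) + 1 := by positivity
    obtain ⟨c', h1, h2, h3⟩ := graph_bound (G.comap (Prod.fst : V × Fin (k + 1) → V))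
      (n * ((k : ℝ) + 1)) (by simp [hn]) (by positivity)
    rw [tot_blow] at h1 h2
    rw [wk_blow] at h3
    push_cast at h1 h2 h3
    have e : ((k : ℝ) + 1) ^ 2 * tot (adjR G) / (n * ((k : ℝ) + 1)) ^ 2 = tot (adjR G) / n ^ 2 := by
      field_simp
    rw [e] at h1 h2
    refine ⟨c', h1, ?_, ?_⟩
    · have : 1 / n * (1 / ((k : ℝ) + 1)) = 1 / (n * ((k : ℝ) + 1)) := by field_simp
      rw [this]; exact h2
    · have : ((k : ℝ) + 1) ^ 5 * wk (adjR G) ≤ ((k : ℝ) + 1) ^ 5 * (bndF c' * n ^ 5) := by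
        refine h3.trans (le_of_eq ?_); ring
      exact le_of_mul_le_mul_left this (by positivity)
  choose c' h1 h2 h3 using hstep
  have hlim : Filter.Tendsto c' Filter.atTop (nhds (tot (adjR G) / n ^ 2)) := by
    refine tendsto_of_tendsto_of_tendsto_of_le_of_le tendsto_const_nhds ?_ h1 h2
    have := (tendsto_one_div_add_atTop_nhds_zero_nat (𝕜 := ℝ)).const_mul (1 / n)
    simpa using this.const_add (tot (adjR G) / n ^ 2)
  have := ((bndF_cont.tendsto _).comp hlim).mul_const (n ^ 5)
  exact ge_of_tendsto' this h3

lemma tot_edges {V : Type*} [Fintype V] (G : SimpleGraph V) :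
    tot (adjR G) = 2 * (Nat.card G.edgeSet : ℝ) := by
  have h := G.sum_degrees_eq_twice_card_edges
  have h2 : ∀ x, ∑ y, adjR G x y = (G.degree x : ℝ) := by
    intro x
    simp [adjR, SimpleGraph.degree, SimpleGraph.neighborFinset_eq_filter]
  unfold tot
  simp only [h2]
  rw [Nat.card_eq_fintype_card, ← SimpleGraph.edgeFinset_card]
  exact_mod_cast h

lemma path_le {V : Type*} [Fintype V] (G : SimpleGraph V) :
    (Nat.card {f : Fin 5 → V //
      Function.Injective f ∧ ∀ i : Fin 4, G.Adj (f i.castSucc) (f i.succ)} : ℝ) ≤ wk (adjR G) := by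
  have e : wk (adjR G) = ∑ q : V × ((V × V) × (V × V)),
      if G.Adj q.1 q.2.1.1 ∧ G.Adj q.2.1.1 q.2.1.2 ∧ G.Adj q.1 q.2.2.1 ∧ G.Adj q.2.2.1 q.2.2.2
      then (1 : ℝ) else 0 := by
    rw [Fintype.sum_prod_type]
    unfold wk
    refine sum_congr rfl fun x _ => ?_
    have : ∑ y, adjR G x y * ∑ z, adjR G y z
        = ∑ a : V × V, adjR G x a.1 * adjR G a.1 a.2 := by
      rw [Fintype.sum_prod_type]; simp only [mul_sum]
    rw [this, sq, sum_mul_sum]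
    refine Eq.trans ?_ (Fintype.sum_prod_type _).symm
    refine sum_congr rfl fun a _ => sum_congr rfl fun b _ => ?_
    unfold adjR
    by_cases h1 : G.Adj x a.1 <;> by_cases h2 : G.Adj a.1 a.2 <;> by_cases h3 : G.Adj x b.1 <;>
      by_cases h4 : G.Adj b.1 b.2 <;> simp [h1, h2, h3, h4]
  rw [e, sum_boole, Nat.card_eq_fintype_card, ← Fintype.card_subtype]
  norm_cast
  refine Fintype.card_le_of_injective (fun f => ⟨(f.1 2, ((f.1 1, f.1 0), (f.1 3, f.1 4))), ?_⟩) ?_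
  · have h0 : G.Adj (f.1 0) (f.1 1) := f.2.2 0
    have h1 : G.Adj (f.1 1) (f.1 2) := f.2.2 1
    have h2 : G.Adj (f.1 2) (f.1 3) := f.2.2 2
    have h3 : G.Adj (f.1 3) (f.1 4) := f.2.2 3
    exact ⟨h1.symm, h0.symm, h2, h3⟩
  · intro f g h
    simp only [Subtype.mk.injEq, Prod.mk.injEq] at h
    obtain ⟨g2, ⟨g1, g0⟩, g3, g4⟩ := h
    apply Subtype.ext
    funext i
    fin_cases i
    · exact g0
    · exact g1
    · exact g2
    · exact g3
    · exact g4

end P4d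

theorem path4_upper_bound {V : Type*} [Fintype V] (G : SimpleGraph V)
    (n e : ℕ) (hn : n = Fintype.card V) (he : e = Nat.card G.edgeSet)
    (c : ℝ) (hc : c = 2 * e / (n : ℝ) ^ 2) :
    (pathCount4 G : ℝ) ≤
      1 / 2 * max ((1 - Real.sqrt (1 - c)) ^ 2 * ((c + 1) * Real.sqrt (1 - c) + c))
        (c ^ ((5 : ℝ) / 2)) * (n : ℝ) ^ 5 := by
  have h1 : (pathCount4 G : ℝ) ≤ 1 / 2 * wk (adjR G) := by
    have h2 := path_le G
    have h3 : (pathCount4 G : ℝ) ≤ (Nat.card {f : Fin 5 → V //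
      Function.Injective f ∧ ∀ i : Fin 4, G.Adj (f i.castSucc) (f i.succ)} : ℝ) / 2 := by
      unfold pathCount4
      exact Nat.cast_div_le
    linarith
  rcases Nat.eq_zero_or_pos n with h0 | h0
  · have hV : IsEmpty V := by
      rw [← Fintype.card_eq_zero_iff, ← hn, h0]
    have hw : wk (adjR G) = 0 := by simp [wk]
    rw [hw] at h1
    rw [h0]
    simpa using h1
  · have h4 := walk_bound G (n : ℝ) (by rw [hn]) (by exact_mod_cast h0)
    rw [tot_edges, ← he, ← hc] at h4
    unfold bndF at h4
    rw [mul_assoc]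
    linarith
end

section
/- Let 0 ≤ c ≤ 1 and let K be a positive integer. Let A : [0,1)² → [0,1] be a function satisfying ∫₀¹∫₀¹ A(x,y) dx dy = c and A(x,y) = A(y,x) for all 0 ≤ x,y < 1, and suppose there are numbers 0 = q₀ < q₁ < … < q_K = 1 such that A is constant on each rectangle [q_{i−1}, q_i) × [q_{j−1}, q_j) for all 1 ≤ i, j ≤ K. Then S(A) ≤ max( (1−√(1−c))²·((c+1)√(1−c)+c), c^{5/2} ). -/
open MeasureTheory

/-- `ell A x = ∫₀¹ A(x,y) dy`. -/
noncomputable def ell (A : ℝ → ℝ → ℝ) (x : ℝ) : ℝ := ∫ y in (0:ℝ)..1, A x y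

/-- `S(A) = ∫₀¹∫₀¹ ℓ(x)·ℓ(y)·min(ℓ(x),ℓ(y)) dx dy`. -/
noncomputable def Sfun (A : ℝ → ℝ → ℝ) : ℝ :=
  ∫ x in (0:ℝ)..1, ∫ y in (0:ℝ)..1, ell A x * ell A y * min (ell A x) (ell A y)


lemma poly_i (t s : ℝ) (h0 : 0 < s) (hst : s ≤ t) (ht : t ≤ 1/2) :
    8*s*(1+s^2-2*s*t) + (1+s^2)^2*(2*s*(1-s^2)-(t+s)*(2-t^2-s^2))
      - 2*s*(3+t^2)*(1-t^2)*(1-s*t) ≤ 0 := by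
  have key : 8*s*(1+s^2-2*s*t) + (1+s^2)^2*(2*s*(1-s^2)-(t+s)*(2-t^2-s^2))
      - 2*s*(3+t^2)*(1-t^2)*(1-s*t) = (t-s) * (-16*s^2 - (1+s^2)^2*(2-t^2-2*s*t-3*s^2)
      + 2*s*((1-s*t)*(t+s)*(2+t^2+s^2) + s*(3-2*s^2-s^4))) := by ring
  rw [key]
  apply mul_nonpos_of_nonneg_of_nonpos (by linarith)
  have h1 : 0 ≤ 2-t^2-2*s*t-3*s^2 := by nlinarith
  have h2 : 2-t^2-2*s*t-3*s^2 ≤ (1+s^2)^2*(2-t^2-2*s*t-3*s^2) := by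
    have : (1:ℝ) ≤ (1+s^2)^2 := by nlinarith [sq_nonneg s, sq_nonneg (s^2)]
    nlinarith
  have h3 : (1-s*t)*(t+s)*(2+t^2+s^2) ≤ (t+s)*(5/2) := by
    have e1 : (1-s*t) ≤ 1 := by nlinarith
    have e2 : 2+t^2+s^2 ≤ 5/2 := by nlinarith
    have e3 : 0 ≤ t+s := by linarith
    have e4 : 0 ≤ 1-s*t := by nlinarith
    calc (1-s*t)*(t+s)*(2+t^2+s^2) ≤ (1-s*t)*(t+s)*(5/2) := by gcongr
      _ ≤ 1*(t+s)*(5/2) := by gcongr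
      _ = _ := by ring
  have h4 : s*(3-2*s^2-s^4) ≤ 3*s := by nlinarith [pow_pos h0 3, pow_pos h0 5]
  nlinarith [mul_le_mul_of_nonneg_left h3 h0.le, mul_le_mul_of_nonneg_left h4 h0.le]

lemma poly_ii (t s : ℝ) (h0 : 0 < s) (hs : s ≤ 1/7) (ht0 : 1/2 ≤ t) (ht : t ≤ 7/10) :
    8*s*(1+s^2-2*s*t) + (1+s^2)^2*(2*s*(1-s^2)-(t+s)*(2-t^2-s^2))
      - 4*s*(3/4)*(1-t^2)*(1-s*t) ≤ 0 := by
  have hb : 2*s*(1-s^2)-(t+s)*(2-t^2-s^2) ≤ 0 := by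
    nlinarith [mul_nonneg h0.le h0.le, mul_nonneg h0.le (by linarith : 0 ≤ t)]
  have h1 : (1:ℝ) ≤ (1+s^2)^2 := by nlinarith [sq_nonneg s, sq_nonneg (s^2)]
  have h2 : (1+s^2)^2*(2*s*(1-s^2)-(t+s)*(2-t^2-s^2)) ≤ 2*s*(1-s^2)-(t+s)*(2-t^2-s^2) := by
    nlinarith
  have h3 : (1-t^2)*(1-s*t) ≥ (1-t^2)*(9/10) := by
    apply mul_le_mul_of_nonneg_left <;> nlinarith
  have h4 := mul_le_mul_of_nonneg_left h3 h0.le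
  have h5 : 0 ≤ (t-1/2)*(7/10-t) := by apply mul_nonneg <;> linarith
  have h6 : 0 ≤ s*(1/7-s) := by apply mul_nonneg <;> linarith
  nlinarith [mul_nonneg h5 h0.le, mul_nonneg h5 (by linarith : 0 ≤ t), mul_nonneg h6 h0.le, mul_nonneg h6 (by linarith : 0 ≤ t), mul_nonneg (by linarith : 0 ≤ 1/7 - s) (by linarith : 0 ≤ t -1/2), mul_nonneg (by linarith : 0 ≤ 1/7 - s) (by linarith : 0 ≤ 7/10-t)]

lemma poly_iii (t s : ℝ) (h0 : 0 < s) (hs : s ≤ 1/7) (ht0 : 7/10 ≤ t) (ht : t ≤ 1) :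
    8*s*(1+s^2-2*s*t) + (1+s^2)^2*(2*s*(1-s^2)-(t+s)*(2-t^2-s^2)) ≤ 0 := by
  have hb : 2*s*(1-s^2)-(t+s)*(2-t^2-s^2) ≤ 0 := by
    nlinarith [mul_nonneg h0.le h0.le, mul_nonneg h0.le (by linarith : 0 ≤ t)]
  have h1 : (1:ℝ)+2*s^2 ≤ (1+s^2)^2 := by nlinarith [sq_nonneg s, sq_nonneg (s^2)]
  have h2 : (1+s^2)^2*(2*s*(1-s^2)-(t+s)*(2-t^2-s^2)) ≤ (1+2*s^2)*(2*s*(1-s^2)-(t+s)*(2-t^2-s^2)) := by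
    nlinarith
  have h5 : 0 ≤ (t-7/10)*(1-t) := by apply mul_nonneg <;> linarith
  have hc : -((t+s)*(2-t^2-s^2)) ≤ (-((7/10+s)*(151/100-s^2))*(1-t) + -((1+s)*(1-s^2))*(t-7/10))/(3/10) := by
    have : (-((7/10+s)*(151/100-s^2))*(1-t) + -((1+s)*(1-s^2))*(t-7/10))/(3/10) - (-((t+s)*(2-t^2-s^2))) = (t-7/10)*(1-t)*(t+17/10+s) := by ring
    have : 0 ≤ (t-7/10)*(1-t)*(t+17/10+s) := mul_nonneg h5 (by linarith)
    linarith
  have k1 : 8*s*(1+s^2-2*s*(7/10)) + (1+2*s^2)*(2*s*(1-s^2) -(7/10+s)*(151/100-s^2)) ≤ 0 := by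
    nlinarith [pow_pos h0 2, pow_pos h0 3, mul_nonneg h0.le (by linarith : 0 ≤ 1/7 - s), sq_nonneg s, pow_pos h0 4, pow_pos h0 5, mul_nonneg (pow_pos h0 2).le (by linarith : 0 ≤ 1/7 - s), mul_nonneg (pow_pos h0 3).le (by linarith : 0 ≤ 1/7 - s), mul_nonneg (pow_pos h0 4).le (by linarith : 0 ≤ 1/7 - s)]
  have k2 : 8*s*(1+s^2-2*s) + (1+2*s^2)*(2*s*(1-s^2) -(1+s)*(1-s^2)) ≤ 0 := by
    nlinarith [pow_pos h0 2, pow_pos h0 3, mul_nonneg h0.le (by linarith : 0 ≤ 1/7 - s), sq_nonneg s, pow_pos h0 4, pow_pos h0 5, mul_nonneg (pow_pos h0 2).le (by linarith : 0 ≤ 1/7 - s), mul_nonneg (pow_pos h0 3).le (by linarith : 0 ≤ 1/7 - s), mul_nonneg (pow_pos h0 4).le (by linarith : 0 ≤ 1/7 - s)]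
  have h7 : (1+2*s^2)*(2*s*(1-s^2)-(t+s)*(2-t^2-s^2)) ≤ (1+2*s^2)*(2*s*(1-s^2)+(-((7/10+s)*(151/100-s^2))*(1-t) + -((1+s)*(1-s^2))*(t-7/10))/(3/10)) := by
    apply mul_le_mul_of_nonneg_left _ (by positivity)
    linarith
  have k3 := mul_nonneg_of_nonpos_of_nonpos k1 (by linarith : t - 1 ≤ 0)
  have k4 := mul_nonpos_of_nonpos_of_nonneg k2 (by linarith : 0 ≤ t - 7/10)
  linarith


lemma lin_t {p q a b t : ℝ} (hab : a ≤ t) (htb : t ≤ b) (h : a < b) (h1 : 0 ≤ p + q*a) (h2 : 0 ≤ p+q*b) :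
    0 ≤ p + q*t := by
  have k1 := mul_nonneg h1 (by linarith : 0 ≤ b - t)
  have k2 := mul_nonneg h2 (by linarith : 0 ≤ t - a)
  have : (b-a)*(p+q*t) = (p + q*a)*(b-t) + (p+q*b)*(t-a) := by ring
  have h3 : 0 ≤ (b-a)*(p+q*t) := by linarith
  exact nonneg_of_mul_nonneg_right h3 (by linarith)

lemma poly_iv (t s : ℝ) (hs : 1/7 ≤ s) (hst : s ≤ t) (ht0 : 1/2 ≤ t) (ht : t ≤ 7/10) :
    -(8*s*(1+s^2-2*s*t)) + (1-t)*(1+t)^2*(1+s^2)^2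
      - 4*s*(3/4)*(1+t)*(t-s)*(1-s*t) ≤ 0 := by
  rcases le_total s (1/4) with h | h
  · have hq : (1-t)*(1+t)^2 ≤ 1.081125 - 1.0075*(t-0.55) := by
      nlinarith [mul_nonneg (sq_nonneg (t-0.55)) (by linarith : 0 ≤ t)]
    have hq' := mul_le_mul_of_nonneg_right hq (sq_nonneg (1+s^2))
    have h3 : s*((1.5*(1/2-s)+(2-s)*(t-1/2)) * 0.825) ≤ s*((1+t)*(t-s)*(1-s*t)) := by
      apply mul_le_mul_of_nonneg_left _ (by linarith)
      have e : 1.5*(1/2-s)+(2-s)*(t-1/2) ≤ (1+t)*(t-s) := by nlinarith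
      have e2 : 0.825 ≤ 1-s*t := by nlinarith
      apply mul_le_mul e e2 (by norm_num)
      nlinarith
    have := lin_t (t := t) (p := 8*s*(1+s^2)+3*(s*((1.5*(1/2-s)-(2-s)*(1/2)) * 0.825)) - (1.081125+1.0075*0.55)*(1+s^2)^2) (q := -16*s^2+3*s*(2-s)*0.825+1.0075*(1+s^2)^2) ht0 ht (by norm_num) (by nlinarith [mul_nonneg (by linarith : 0 ≤ s-1/7) (by linarith : 0 ≤ 1/4-s), sq_nonneg (s^2), sq_nonneg s]) (by nlinarith [mul_nonneg (by linarith : 0 ≤ s-1/7) (by linarith : 0 ≤ 1/4-s), sq_nonneg (s^2), sq_nonneg s])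
    linarith
  · have hq : (1-t)*(1+t)^2 ≤ 1.024 - 1.28*(t-0.6) := by
      nlinarith [mul_nonneg (sq_nonneg (t-0.6)) (by linarith : 0 ≤ t)]
    have hq' := mul_le_mul_of_nonneg_right hq (sq_nonneg (1+s^2))
    have h3 : 0 ≤ 4*s*(3/4)*(1+t)*(t-s)*(1-s*t) := by
      have : 0 ≤ 1 - s*t := by nlinarith
      have : 0 ≤ t - s := by linarith
      have : 0 ≤ s := by linarith
      have : 0 ≤ t := by linarith
      positivity
    have := lin_t (t := t) (p := 8*s*(1+s^2) - (1.024+1.28*0.6)*(1+s^2)^2) (q := -16*s^2+1.28*(1+s^2)^2) ht0 ht (by norm_num) (by nlinarith [mul_nonneg (by linarith : 0 ≤ s-1/4) (by linarith : 0 ≤ 7/10-s), sq_nonneg (s^2), sq_nonneg s]) (by nlinarith [mul_nonneg (by linarith : 0 ≤ s-1/4) (by linarith : 0 ≤ 7/10-s), sq_nonneg (s^2), sq_nonneg s])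
    linarith

lemma poly_v (t s : ℝ) (hs : 1/7 ≤ s) (hst : s ≤ t) (ht0 : 7/10 ≤ t) (ht : t ≤ 1) :
    -(8*s*(1+s^2-2*s*t)) + (1-t)*(1+t)^2*(1+s^2)^2 ≤ 0 := by
  rcases le_total s (7/10) with h | h
  · have hq : (1-t)*(1+t)^2 ≤ 49/64 - 35/16*(t-3/4) := by
      nlinarith [mul_nonneg (sq_nonneg (t-3/4)) (by linarith : 0 ≤ t)]
    have hq' := mul_le_mul_of_nonneg_right hq (sq_nonneg (1+s^2))
    have := lin_t (t := t) (p := 8*s*(1+s^2) - (49/64+35/16*(3/4))*(1+s^2)^2) (q := -16*s^2+35/16*(1+s^2)^2) ht0 ht (by norm_num) (by nlinarith [mul_nonneg (by linarith : 0 ≤ s-1/7) (by linarith : 0 ≤ 7/10-s), sq_nonneg (s^2), sq_nonneg s]) (by nlinarith [mul_nonneg (by linarith : 0 ≤ s-1/7) (by linarith : 0 ≤ 7/10-s), sq_nonneg (s^2), sq_nonneg s])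
    linarith
  · have hq : (1-t)*(1+t)^2 ≤ 4*(1-t) := by nlinarith [mul_nonneg (by linarith : 0 ≤ 1-t) (by linarith : 0 ≤ t)]
    have hq' := mul_le_mul_of_nonneg_right hq (sq_nonneg (1+s^2))
    have : 0 ≤ 4*(1-s)^2*(2*s - (1-t)*(1+s)^2) := by
      apply mul_nonneg (by positivity)
      have : (1+s)^2 ≤ 4 := by nlinarith
      nlinarith
    nlinarith

lemma interp {y E X s z R k : ℝ} (hy : 0 ≤ y) (hE : 0 ≤ E) (hEy : E ≤ y)
    (hX : X ≤ E*s+(y-E)*z) (h1 : k+y*s ≤ R) (h2 : k+y*z ≤ R) : k+X ≤ R := by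
  rcases hy.eq_or_lt with h | h
  · have : E = 0 := by linarith
    subst this; rw [← h] at hX h1; linarith
  · have k1 := mul_le_mul_of_nonneg_left h1 hE
    have k2 := mul_le_mul_of_nonneg_left h2 (by linarith : 0 ≤ y - E)
    have k3 := mul_le_mul_of_nonneg_left hX hy
    have : y*(k+X) ≤ y*R := by linarith
    exact le_of_mul_le_mul_left this h

/-- scaled value of the two-step family -/
lemma f_bound (t s M : ℝ) (hs : 0 < s) (hst : s ≤ t) (ht : t ≤ 1) (hM1 : 1 ≤ M)
    (hM2 : s + (1-s^2)*(1+s^2)^2/(8*s) ≤ M) : t + (1-t^2)*(1+t^2)^2/(8*t) ≤ M := by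
  have ht0 : 0 < t := by linarith
  rcases le_total 1 (6*t+4*t^2+2*t^3+t^4) with h | h
  · refine le_trans ?_ hM1
    have : t + (1-t^2)*(1+t^2)^2/(8*t) - 1 = (1-t)^2*(1-(6*t+4*t^2+2*t^3+t^4))/(8*t) := by
      field_simp; ring
    have : (1-t)^2*(1-(6*t+4*t^2+2*t^3+t^4))/(8*t) ≤ 0 := by
      apply div_nonpos_of_nonpos_of_nonneg _ (by linarith)
      nlinarith [sq_nonneg (1-t)]
    linarith
  · refine le_trans ?_ hM2
    have h6 : t ≤ 1/6 := by nlinarith [pow_pos ht0 2, pow_pos ht0 3, pow_pos ht0 4]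
    have : s + (1-s^2)*(1+s^2)^2/(8*s) - (t + (1-t^2)*(1+t^2)^2/(8*t))
        = (t-s)*(1 - s*t*(9 - (t^2+t*s+s^2) - (t^4+t^3*s+t^2*s^2+t*s^3+s^4)))/(8*s*t) := by
      field_simp; ring
    have : 0 ≤ (t-s)*(1 - s*t*(9 - (t^2+t*s+s^2) - (t^4+t^3*s+t^2*s^2+t*s^3+s^4)))/(8*s*t) := by
      apply div_nonneg _ (by positivity)
      apply mul_nonneg (by linarith)
      have : 0 < s*t := by positivity
      have h1 : s*t ≤ 1/36 := by nlinarith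
      have : 0 ≤ (t^2+t*s+s^2) + (t^4+t^3*s+t^2*s^2+t*s^3+s^4) := by positivity
      nlinarith
    linarith

lemma g_bound (t s M b : ℝ) (hs : 0 < s) (hst : s ≤ t) (ht : t ≤ 1) (hs1 : s < 1) (hM1 : 1 ≤ M)
    (hM2 : s + (1-s^2)*(1+s^2)^2/(8*s) ≤ M)
    (hb : (b = (3+t^2)/2 ∧ t ≤ 1/2) ∨ (b = 3/4 ∧ 1/2 ≤ t ∧ t ≤ 7/10) ∨ (b = 0 ∧ 7/10 ≤ t)) :
    t + (1-t^2)/(2*(1+s^2-2*s*t))*((1-t^2)*(1+s^2)^2/(4*s) - b*(t-s)*(1-s*t)) ≤ M := by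
  have hd : 0 < 1+s^2-2*s*t := by nlinarith [sq_pos_of_pos (by linarith : 0 < 1 - s)]
  have key : (8*s*(1+s^2-2*s*t) + (1+s^2)^2*(2*s*(1-s^2)-(t+s)*(2-t^2-s^2))
      - 4*s*b*(1-t^2)*(1-s*t) ≤ 0) ∨ (-(8*s*(1+s^2-2*s*t)) + (1-t)*(1+t)^2*(1+s^2)^2
      - 4*s*b*(1+t)*(t-s)*(1-s*t) ≤ 0) := by
    rcases hb with ⟨rfl, h⟩ | ⟨rfl, h, h'⟩ | ⟨rfl, h⟩
    · left; have := poly_i t s hs hst h; linarith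
    · rcases le_total s (1/7) with h7 | h7
      · left; exact poly_ii t s hs h7 h h'
      · right; exact poly_iv t s h7 hst h h'
    · rcases le_total s (1/7) with h7 | h7
      · left; have := poly_iii t s hs h7 h ht; linarith
      · right; have := poly_v t s h7 hst h ht; linarith
  rcases key with key | key
  · refine le_trans ?_ hM2
    have e : t + (1-t^2)/(2*(1+s^2-2*s*t))*((1-t^2)*(1+s^2)^2/(4*s) - b*(t-s)*(1-s*t))
      - (s + (1-s^2)*(1+s^2)^2/(8*s)) = (t-s)*(8*s*(1+s^2-2*s*t) + (1+s^2)^2*(2*s*(1-s^2)-(t+s)*(2-t^2-s^2))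
      - 4*s*b*(1-t^2)*(1-s*t))/(8*s*(1+s^2-2*s*t)) := by
      generalize hdd : 1+s^2-2*s*t = d at hd ⊢
      have hd' := hd.ne'
      field_simp
      subst hdd
      ring
    have : (t-s)*(8*s*(1+s^2-2*s*t) + (1+s^2)^2*(2*s*(1-s^2)-(t+s)*(2-t^2-s^2))
      - 4*s*b*(1-t^2)*(1-s*t))/(8*s*(1+s^2-2*s*t)) ≤ 0 := by
      apply div_nonpos_of_nonpos_of_nonneg _ (by positivity)
      exact mul_nonpos_of_nonneg_of_nonpos (by linarith) key
    linarith
  · refine le_trans ?_ hM1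
    have e : t + (1-t^2)/(2*(1+s^2-2*s*t))*((1-t^2)*(1+s^2)^2/(4*s) - b*(t-s)*(1-s*t))
      - 1 = (1-t)*(-(8*s*(1+s^2-2*s*t)) + (1-t)*(1+t)^2*(1+s^2)^2
      - 4*s*b*(1+t)*(t-s)*(1-s*t))/(8*s*(1+s^2-2*s*t)) := by
      generalize hdd : 1+s^2-2*s*t = d at hd ⊢
      have hd' := hd.ne'
      field_simp
      subst hdd
      ring
    have : (1-t)*(-(8*s*(1+s^2-2*s*t)) + (1-t)*(1+t)^2*(1+s^2)^2
      - 4*s*b*(1+t)*(t-s)*(1-s*t))/(8*s*(1+s^2-2*s*t)) ≤ 0 := by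
      apply div_nonpos_of_nonpos_of_nonneg _ (by positivity)
      exact mul_nonpos_of_nonneg_of_nonpos (by linarith) key
    linarith

lemma end_const (k t s R : ℝ) (hs : 0 < s) (hst : s ≤ t) (ht : t ≤ 1)
    (hk : k = 2*s/(1+s^2)) (hR1 : (k^2)^2*(k*s) + (k*s)^2*(1-k*s) ≤ R) (hR2 : k^5 ≤ R) :
    (k^2)^2*(k*t) + (k^2-(k*t)^2)/2*(((k*t)^2+(k^2-(k*t)^2)/2)^2/(k*t)) ≤ R := by
  have hk0 : 0 < k := by rw [hk]; positivity
  have ht0 : 0 < t := by linarith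
  have h5 : 0 < k^5 := by positivity
  have := f_bound t s (R/k^5) hs hst ht (by rw [le_div_iff₀ h5]; linarith) (by
    rw [le_div_iff₀ h5]
    refine le_trans (le_of_eq ?_) hR1
    rw [hk]; field_simp; ring)
  rw [le_div_iff₀ h5] at this
  refine le_trans (le_of_eq ?_) this
  field_simp; ring

lemma end_star (k t s R b : ℝ) (hs : 0 < s) (hst : s ≤ t) (ht : t ≤ 1) (hs1 : s < 1)
    (hk : k = 2*s/(1+s^2)) (hR1 : (k^2)^2*(k*s) + (k*s)^2*(1-k*s) ≤ R) (hR2 : k^5 ≤ R)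
    (hb : (b = (3+t^2)/2 ∧ t ≤ 1/2) ∨ (b = 3/4 ∧ 1/2 ≤ t ∧ t ≤ 7/10) ∨ (b = 0 ∧ 7/10 ≤ t)) :
    (k^2)^2*(k*t) + (k^2-(k*t)^2)/2*((k^2-(k*t)^2)/2/(1-k*t)
      - b*k^2*(k*t - (k^2-(k*t)^2)/2/(1-k*t))) ≤ R := by
  have hk0 : 0 < k := by rw [hk]; positivity
  have ht0 : 0 < t := by linarith
  have h5 : 0 < k^5 := by positivity
  have hd : 0 < 1+s^2-2*s*t := by nlinarith [sq_pos_of_pos (by linarith : 0 < 1 - s)]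
  have := g_bound t s (R/k^5) b hs hst ht hs1 (by rw [le_div_iff₀ h5]; linarith) (by
    rw [le_div_iff₀ h5]
    refine le_trans (le_of_eq ?_) hR1
    rw [hk]; field_simp; ring) hb
  rw [le_div_iff₀ h5] at this
  refine le_trans (le_of_eq ?_) this
  have h1 : 1 - k*t = (1+s^2-2*s*t)/(1+s^2) := by rw [hk]; field_simp
  rw [h1]
  generalize hdd : 1+s^2-2*s*t = d at hd ⊢
  have hd' := hd.ne'
  rw [hk]
  field_simp
  subst hdd
  ring

set_option maxHeartbeats 1000000 in
lemma final_ana (c a k u E R : ℝ) (hk0 : 0 < k) (hkc : k^2 = c) (hc1 : c < 1) (ha0 : 0 < a)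
    (ha1 : a < 1) (hca : c = 2*a-a^2) (hau : a ≤ u) (huk : u ≤ k) (hE : 0 ≤ E)
    (hEy : 2*E ≤ c-u^2) (hR1 : c^2*a+a^2*(1-a) ≤ R) (hR2 : k^5 ≤ R) :
    ∃ A B : ℝ, 0 ≤ B ∧ B ≤ c+u^2+E ∧ (u^2+E)^2/u ≤ A ∧ E/(1-u) - B*(u - E/(1-u)) ≤ A ∧
      c^2*u+A*E+B*u*(c-u^2-2*E) ≤ R := by
  have hk1 : k < 1 := by nlinarith
  have hu0 : 0 < u := by linarith
  obtain ⟨t, rfl⟩ : ∃ t, u = k*t := ⟨u/k, by field_simp⟩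
  obtain ⟨s, rfl⟩ : ∃ s, a = k*s := ⟨a/k, by field_simp⟩
  subst hkc
  have hs : 0 < s := pos_of_mul_pos_right ha0 hk0.le
  have hst : s ≤ t := le_of_mul_le_mul_left hau hk0
  have ht : t ≤ 1 := le_of_mul_le_mul_left (by linarith) hk0
  have ht0 : 0 < t := by linarith
  have hks : k*(1+s^2) = 2*s := by
    have : k*(k*(1+s^2)) = k*(2*s) := by linarith
    exact mul_left_cancel₀ hk0.ne' this
  have hs1 : s < 1 := by
    by_contra h
    have : s = 1 := by linarith
    subst this; linarith
  have hk : k = 2*s/(1+s^2) := by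
    rw [eq_div_iff (by positivity)]; exact hks
  have hu1 : k*t < 1 := by linarith
  have e1 := end_const k t s R hs hst ht hk hR1 hR2
  have e2 := fun b => end_star k t s R b hs hst ht hs1 hk hR1 hR2
  set u := k*t with hu
  set y := (k^2-u^2)/2 with hy
  have hn : 0 < 1-u := by linarith
  have hy0 : 0 ≤ y := by linarith
  have hEy' : E ≤ y := by linarith
  -- reduce max to two branches
  have red : ∀ B, 0 ≤ B → B ≤ k^2+u^2+E →
      (k^2)^2*u + ((u^2+E)^2/u*E+B*u*(2*(y-E))) ≤ R →
      (k^2)^2*u + ((E/(1-u) - B*(u - E/(1-u)))*E+B*u*(2*(y-E))) ≤ R →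
      ∃ A B : ℝ, 0 ≤ B ∧ B ≤ k^2+u^2+E ∧ (u^2+E)^2/u ≤ A ∧ E/(1-u) - B*(u - E/(1-u)) ≤ A ∧
      (k^2)^2*u+A*E+B*u*(k^2-u^2-2*E) ≤ R := by
    intro B hB1 hB2 h1 h2
    have hh : k^2-u^2-2*E = 2*(y-E) := by rw [hy]; ring
    rcases le_total ((u^2+E)^2/u) (E/(1-u) - B*(u - E/(1-u))) with h | h
    · exact ⟨_, B, hB1, hB2, h, le_rfl, by rw [hh]; linarith⟩
    · exact ⟨_, B, hB1, hB2, le_rfl, h, by rw [hh]; linarith⟩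
  -- constant B
  have cst : ∀ b, 0 ≤ b → b ≤ 1 → (k^2)^2*u + y*(2*(b*k^2)*u) ≤ R →
      ((b = (3+t^2)/2 ∧ t ≤ 1/2) ∨ (b = 3/4 ∧ 1/2 ≤ t ∧ t ≤ 7/10) ∨ (b = 0 ∧ 7/10 ≤ t)) →
      ∃ A B : ℝ, 0 ≤ B ∧ B ≤ k^2+u^2+E ∧ (u^2+E)^2/u ≤ A ∧ E/(1-u) - B*(u - E/(1-u)) ≤ A ∧
      (k^2)^2*u+A*E+B*u*(k^2-u^2-2*E) ≤ R := by
    intro b hb0 hb1 hz hb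
    have hB0 : 0 ≤ b*k^2 := by positivity
    apply red (b*k^2) hB0 (by nlinarith [sq_nonneg u, sq_nonneg k])
    · refine interp hy0 hE hEy' ?_ e1 hz
      have : (u^2+E)^2/u ≤ (u^2+y)^2/u := by gcongr
      nlinarith [mul_le_mul_of_nonneg_left this hE]
    · refine interp hy0 hE hEy' ?_ (e2 b hb) hz
      have h1 : E/(1-u) ≤ y/(1-u) := by gcongr
      have : (E/(1-u) - (b*k^2)*(u - E/(1-u))) ≤ (y/(1-u) - b*k^2*(u - y/(1-u))) := by nlinarith
      nlinarith [mul_le_mul_of_nonneg_left this hE]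
  have hk5 : 0 < k^5 := by positivity
  rcases le_total t (1/2) with h | h
  · have hz : (k^2)^2*u + y*(2*(k^2+u^2)*u) ≤ R := by
      refine le_trans ?_ hR2
      have : (k^2)^2*u + y*(2*(k^2+u^2)*u) = k^5*(2*t-t^5) := by rw [hy, hu]; ring
      rw [this]
      have : 0 < t^5 := by positivity
      exact mul_le_of_le_one_right hk5.le (by linarith)
    apply red (k^2+u^2+E) (by positivity) le_rfl
    · refine interp hy0 hE hEy' ?_ e1 hz
      have : E*((u^2+y)^2/u) + (y-E)*(2*(k^2+u^2)*u) - ((u^2+E)^2/u*E+(k^2+u^2+E)*u*(2*(y-E)))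
        = E*(y-E)*((y+E)/u) := by field_simp; ring
      have : 0 ≤ E*(y-E)*((y+E)/u) := by
        have : 0 ≤ y - E := by linarith
        positivity
      linarith
    · have hb := e2 ((3+t^2)/2) (Or.inl ⟨rfl, h⟩)
      have hbk : (3+t^2)/2*k^2 = k^2+u^2+y := by rw [hy, hu]; ring
      rw [hbk] at hb
      refine interp hy0 hE hEy' ?_ hb hz
      have : E*(y/(1-u) - (k^2+u^2+y)*(u - y/(1-u))) + (y-E)*(2*(k^2+u^2)*u) -
         ((E/(1-u) - (k^2+u^2+E)*(u - E/(1-u)))*E+(k^2+u^2+E)*u*(2*(y-E)))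
        = E*(y-E)*((1+k^2+u^2+y+E-3*u*(1-u))/(1-u)) := by field_simp; ring
      have : 0 ≤ E*(y-E)*((1+k^2+u^2+y+E-3*u*(1-u))/(1-u)) := by
        have : 0 ≤ y - E := by linarith
        have h3 : 0 ≤ 1+k^2+u^2+y+E-3*u*(1-u) := by nlinarith [sq_nonneg (u-1/2), sq_nonneg k]
        positivity
      linarith
  · rcases le_total t (7/10) with h' | h'
    · refine cst (3/4) (by norm_num) (by norm_num) (le_trans ?_ hR2) (Or.inr (Or.inl ⟨rfl, h, h'⟩))
      have : (k^2)^2*u + y*(2*((3/4)*k^2)*u) = k^5*(t+3/4*t*(1-t^2)) := by rw [hy, hu]; ring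
      rw [this]
      have : 0 ≤ (1-t)*(1-3/4*t*(1+t)) := by
        apply mul_nonneg (by linarith); nlinarith
      exact mul_le_of_le_one_right hk5.le (by linarith)
    · refine cst 0 (by norm_num) (by norm_num) (le_trans ?_ hR2) (Or.inr (Or.inr ⟨rfl, h'⟩))
      have : (k^2)^2*u + y*(2*(0*k^2)*u) = k^5*t := by rw [hu]; ring
      rw [this]
      exact mul_le_of_le_one_right hk5.le ht

lemma exists_level {ι : Type*} [Fintype ι] (w d : ι → ℝ) (hw : ∀ i, 0 ≤ w i)
    (hw1 : ∑ i, w i = 1) (hd : ∀ i, 0 ≤ d i) :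
    ∃ (u : ℝ) (χ : ι → ℝ), 0 ≤ u ∧ (∀ i, 0 ≤ χ i) ∧ (∀ i, χ i ≤ 1) ∧ (∀ i, u < d i → χ i = 1) ∧
      (∀ i, d i < u → χ i = 0) ∧ ∑ i, w i * χ i = u := by
  classical
  have hne : (Finset.univ : Finset ι).Nonempty := by
    by_contra h
    rw [Finset.not_nonempty_iff_eq_empty] at h
    rw [h] at hw1; simp at hw1
  let Mf : ℝ → ℝ := fun t => ∑ j, w j * (if t ≤ d j then 1 else 0)
  let Nf : ℝ → ℝ := fun t => ∑ j, w j * (if t < d j then 1 else 0)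
  let Qf : ℝ → ℝ := fun t => ∑ j, w j * (if d j = t then 1 else 0)
  have hMNQ : ∀ t, Mf t = Nf t + Qf t := by
    intro t
    simp only [Mf, Nf, Qf, ← Finset.sum_add_distrib]
    refine Finset.sum_congr rfl fun j _ => ?_
    rw [← mul_add]
    congr 1
    rcases lt_trichotomy t (d j) with h | h | h
    · rw [if_pos h.le, if_pos h, if_neg h.ne']; norm_num
    · rw [if_pos h.le, if_neg (by rw [h]; exact lt_irrefl _), if_pos h.symm]; norm_num
    · rw [if_neg (not_le.2 h), if_neg (not_lt.2 h.le), if_neg h.ne]; norm_num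
  have hM0 : ∀ t, 0 ≤ Mf t := fun t => Finset.sum_nonneg fun j _ =>
    mul_nonneg (hw j) (by split_ifs <;> norm_num)
  have hQ0 : ∀ t, 0 ≤ Qf t := fun t => Finset.sum_nonneg fun j _ =>
    mul_nonneg (hw j) (by split_ifs <;> norm_num)
  obtain ⟨i0, -, hi0⟩ := Finset.exists_max_image Finset.univ (fun i => min (d i) (Mf (d i))) hne
  set u := min (d i0) (Mf (d i0)) with hu
  have hu0 : 0 ≤ u := le_min (hd _) (hM0 _)
  have hanti : ∀ s t, s ≤ t → Mf t ≤ Mf s := by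
    intro s t hst
    refine Finset.sum_le_sum fun j _ => mul_le_mul_of_nonneg_left ?_ (hw j)
    split_ifs with h1 h2 h2
    · exact le_rfl
    · exact absurd (hst.trans h1) h2
    · norm_num
    · exact le_rfl
  have huM : u ≤ Mf u := (min_le_right _ _).trans (hanti _ _ (min_le_left _ _))
  have hNu : Nf u ≤ u := by
    by_cases hS : (Finset.univ.filter fun j => u < d j).Nonempty
    · obtain ⟨j, hj, hjm⟩ := Finset.exists_min_image _ d hS
      have hj' : u < d j := by simpa using hj
      have h1 : Mf (d j) ≤ u := by
        rcases min_le_iff.1 (hi0 j (Finset.mem_univ _)) with h | h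
        · exact absurd hj' (not_lt.2 h)
        · exact h
      refine le_trans ?_ h1
      refine Finset.sum_le_sum fun k _ => mul_le_mul_of_nonneg_left ?_ (hw k)
      split_ifs with h1 h2 h2
      · exact le_rfl
      · exact absurd (hjm k (by simpa using h1)) h2
      · norm_num
      · exact le_rfl
    · have : Nf u = 0 := by
        refine Finset.sum_eq_zero fun j _ => ?_
        rw [if_neg, mul_zero]
        intro h
        exact hS ⟨j, by simpa using h⟩
      rw [this]; exact hu0
  rw [hMNQ] at huM
  obtain ⟨l, hl0, hl1, hl⟩ : ∃ l : ℝ, 0 ≤ l ∧ l ≤ 1 ∧ Nf u + l * Qf u = u := by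
    rcases (hQ0 u).eq_or_lt with h | h
    · refine ⟨0, le_rfl, zero_le_one, ?_⟩
      linarith
    · refine ⟨(u - Nf u)/Qf u, div_nonneg (by linarith) h.le, ?_, ?_⟩
      · rw [div_le_one h]; linarith
      · rw [div_mul_cancel₀ _ h.ne']; ring
  refine ⟨u, fun i => (if u < d i then 1 else 0) + l * (if d i = u then 1 else 0), hu0, ?_, ?_, ?_, ?_, ?_⟩
  · intro i; dsimp only; split_ifs <;> linarith
  · intro i; dsimp only; split_ifs with h1 h2
    · linarith
    · linarith
    · linarith
    · linarith
  · intro i h; dsimp only; rw [if_pos h, if_neg h.ne']; ring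
  · intro i h; dsimp only; rw [if_neg (not_lt.2 h.le), if_neg h.ne]; ring
  · refine Eq.trans ?_ hl
    simp only [Nf, Qf, Finset.mul_sum, ← Finset.sum_add_distrib]
    refine Finset.sum_congr rfl fun j _ => by ring

lemma sum_symm_half {ι : Type*} [Fintype ι] (f g : ι → ι → ℝ)
    (h : ∀ i j, f i j + f j i = g i j + g j i) : ∑ i, ∑ j, f i j = ∑ i, ∑ j, g i j := by
  have e1 : ∑ i, ∑ j, (f i j + f j i) = ∑ i, ∑ j, (g i j + g j i) :=
    Finset.sum_congr rfl fun i _ => Finset.sum_congr rfl fun j _ => h i j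
  simp only [Finset.sum_add_distrib] at e1
  rw [Finset.sum_comm (f := fun i j => f j i), Finset.sum_comm (f := fun i j => g j i)] at e1
  linarith

lemma bathtub {ι : Type*} [Fintype ι] (w d χ : ι → ℝ) (a : ι → ι → ℝ) (u : ℝ)
    (hw : ∀ i, 0 ≤ w i) (ha0 : ∀ i j, 0 ≤ a i j) (ha1 : ∀ i j, a i j ≤ 1)
    (hsym : ∀ i j, a i j = a j i) (hd : ∀ i, d i = ∑ j, w j * a i j)
    (hχ0 : ∀ i, 0 ≤ χ i) (hχ1 : ∀ i, χ i ≤ 1) (hgt : ∀ i, u < d i → χ i = 1)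
    (hχ : ∑ i, w i * χ i = u) :
    2*u*(∑ i, w i * max (d i - u) 0) - ∑ i, ∑ j, w i * w j * max (min (d i) (d j) - u) 0
      ≤ ∑ j, w j * (1 - χ j) * (2*u*d j - d j^2) := by
  classical
  let s : ι → ι → ℝ := fun i k => (if d i < d k then 1 else 0) + (if d i ≤ d k then 1 else 0)
  have hs2 : ∀ i k, s i k + s k i = 2 := by
    intro i k
    simp only [s]
    rcases lt_trichotomy (d i) (d k) with h | h | h
    · rw [if_pos h, if_pos h.le, if_neg (not_lt.2 h.le), if_neg (not_le.2 h)]; norm_num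
    · rw [h]; norm_num
    · rw [if_pos h, if_pos h.le, if_neg (not_lt.2 h.le), if_neg (not_le.2 h)]; norm_num
  have hs0 : ∀ i k, 0 ≤ s i k := by
    intro i k; simp only [s]; split_ifs <;> norm_num
  let T : ι → ℝ := fun i => ∑ k, w k * s i k
  have hT : ∀ i, u < d i → T i ≤ 2*u := by
    intro i hi
    rw [← hχ, Finset.mul_sum]
    refine Finset.sum_le_sum fun k _ => ?_
    have : s i k ≤ 2 * χ k := by
      by_cases h : d i ≤ d k
      · rw [hgt k (hi.trans_le h)]
        simp only [s]; split_ifs <;> norm_num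
      · simp only [s]
        rw [if_neg h, if_neg (fun h' => h h'.le)]
        have := hχ0 k
        linarith
    nlinarith [hw k]
  have hQ : ∑ i, ∑ j, w i * w j * max (min (d i) (d j) - u) 0
      = ∑ i, ∑ j, w i * w j * (max (d i - u) 0 * s i j) := by
    apply sum_symm_half
    intro i j
    have : max (min (d i) (d j) - u) 0 + max (min (d j) (d i) - u) 0
        = max (d i - u) 0 * s i j + max (d j - u) 0 * s j i := by
      simp only [s]
      rcases lt_trichotomy (d i) (d j) with h | h | h
      · rw [if_pos h, if_pos h.le, if_neg (not_lt.2 h.le), if_neg (not_le.2 h), min_eq_left h.le,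
          min_eq_right h.le]; ring
      · rw [h]; simp
      · rw [if_pos h, if_pos h.le, if_neg (not_lt.2 h.le), if_neg (not_le.2 h), min_eq_left h.le,
          min_eq_right h.le]; ring
    calc _ = w i * w j * (max (min (d i) (d j) - u) 0 + max (min (d j) (d i) - u) 0) := by ring
      _ = _ := by rw [this]; ring
  let r : ι → ℝ := fun i => if u < d i then 1 else 0
  have hr0 : ∀ i, 0 ≤ r i := by intro i; simp only [r]; split_ifs <;> norm_num
  have hr1 : ∀ i, r i ≤ 1 := by intro i; simp only [r]; split_ifs <;> norm_num
  have hL : 2*u*(∑ i, w i * max (d i - u) 0) - ∑ i, ∑ j, w i * w j * max (min (d i) (d j) - u) 0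
      = ∑ i, w i * (max (d i - u) 0 * (2*u - T i)) := by
    rw [hQ, Finset.mul_sum, ← Finset.sum_sub_distrib]
    refine Finset.sum_congr rfl fun i _ => ?_
    have : ∑ j, w i * w j * (max (d i - u) 0 * s i j) = w i * max (d i - u) 0 * T i := by
      simp only [T, Finset.mul_sum]
      refine Finset.sum_congr rfl fun j _ => by ring
    rw [this]; ring
  rw [hL]
  have h1 : ∑ i, w i * (max (d i - u) 0 * (2*u - T i))
      ≤ ∑ i, w i * (r i * (2*u - T i) * ∑ j, w j * (1 - χ j) * a i j) := by
    refine Finset.sum_le_sum fun i _ => mul_le_mul_of_nonneg_left ?_ (hw i)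
    by_cases h : u < d i
    · have hri : r i = 1 := if_pos h
      rw [hri, max_eq_left (by linarith), one_mul, mul_comm]
      apply mul_le_mul_of_nonneg_left _ (by linarith [hT i h])
      rw [hd, ← hχ, ← Finset.sum_sub_distrib]
      refine Finset.sum_le_sum fun j _ => ?_
      have := mul_le_mul_of_nonneg_left (ha1 i j) (mul_nonneg (hw j) (hχ0 j))
      linarith
    · have hri : r i = 0 := if_neg h
      rw [hri, max_eq_right (by linarith)]; simp
  refine h1.trans ?_
  have h2 : ∑ i, w i * (r i * (2*u - T i) * ∑ j, w j * (1 - χ j) * a i j)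
      = ∑ j, w j * (1 - χ j) * ∑ i, (w i * r i * a i j) * (2*u - T i) := by
    simp only [Finset.mul_sum]
    rw [Finset.sum_comm]
    refine Finset.sum_congr rfl fun j _ => Finset.sum_congr rfl fun i _ => by ring
  rw [h2]
  refine Finset.sum_le_sum fun j _ => ?_
  by_cases hj : u < d j
  · rw [hgt j hj]; simp
  apply mul_le_mul_of_nonneg_left _ (mul_nonneg (hw j) (by linarith [hχ1 j]))
  let b : ι → ℝ := fun i => w i * r i * a i j
  have hb0 : ∀ i, 0 ≤ b i := fun i => mul_nonneg (mul_nonneg (hw i) (hr0 i)) (ha0 i j)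
  have hbw : ∀ i, b i ≤ w i := by
    intro i
    have : r i * a i j ≤ 1 := mul_le_one₀ (hr1 i) (ha0 i j) (ha1 i j)
    calc b i = w i * (r i * a i j) := by simp only [b]; ring
      _ ≤ w i * 1 := mul_le_mul_of_nonneg_left this (hw i)
      _ = w i := mul_one _
  have hβd : ∑ i, b i ≤ d j := by
    rw [hd]
    refine Finset.sum_le_sum fun i _ => ?_
    rw [hsym j i]
    simp only [b]
    have := mul_le_mul_of_nonneg_left (hr1 i) (mul_nonneg (hw i) (ha0 i j))
    linarith
  have h3 : ∑ i, ∑ k, b i * b k * s i k = (∑ i, b i)^2 := by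
    rw [sq, Finset.sum_mul_sum]
    apply sum_symm_half
    intro i k
    have := hs2 i k
    calc b i * b k * s i k + b k * b i * s k i = b i * b k * (s i k + s k i) := by ring
      _ = _ := by rw [this]; ring
  have h4 : (∑ i, b i)^2 ≤ ∑ i, b i * T i := by
    rw [← h3]
    refine Finset.sum_le_sum fun i _ => ?_
    simp only [T, Finset.mul_sum]
    refine Finset.sum_le_sum fun k _ => ?_
    have := mul_le_mul_of_nonneg_left (hbw k) (mul_nonneg (hb0 i) (hs0 i k))
    linarith
  have h5 : ∑ i, (w i * r i * a i j) * (2*u - T i) = 2*u*∑ i, b i - ∑ i, b i * T i := by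
    rw [Finset.mul_sum, ← Finset.sum_sub_distrib]
    refine Finset.sum_congr rfl fun i _ => by simp only [b]; ring
  rw [h5]
  have h6 : 0 ≤ (d j - ∑ i, b i) * (2*u - d j - ∑ i, b i) :=
    mul_nonneg (by linarith) (by linarith)
  nlinarith

lemma point_bound (F m u E A B : ℝ) (hF : 0 ≤ F) (hFm : F ≤ m) (hFE : F ≤ u*m+E) (hmu : m ≤ u)
    (hu : 0 < u) (hu1 : u < 1) (hE1 : E ≤ u*(1-u)) (hE : 0 ≤ E)
    (hB : 0 ≤ B) (hA1 : (u^2+E)^2/u ≤ A) (hA2 : E/(1-u) - B*(u - E/(1-u)) ≤ A) :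
    F^2 ≤ A*m+B*(m*(u-m)) := by
  have hn : 0 < 1-u := by linarith
  obtain ⟨p, hp⟩ : ∃ p, p = E/(1-u) := ⟨_, rfl⟩
  rw [← hp] at hA2
  have hEp : E = p*(1-u) := by rw [hp, div_mul_cancel₀ _ hn.ne']
  have hp0 : 0 ≤ p := by rw [hp]; positivity
  have hpu : p ≤ u := by rw [hp, div_le_iff₀ hn]; exact hE1
  rw [div_le_iff₀ hu] at hA1
  have hm : 0 ≤ m := hF.trans hFm
  rcases le_total m p with h | h
  · have h1 : m ≤ A + B*(u-m) := by
      have := mul_nonneg hB (by linarith : 0 ≤ p - m)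
      linarith
    have h2 : m*m ≤ m*(A+B*(u-m)) := mul_le_mul_of_nonneg_left h1 hm
    have h3 : F^2 ≤ m*m := by nlinarith
    linarith
  · have h3 : F^2 ≤ (u*m+E)^2 := by
      apply pow_le_pow_left₀ hF hFE
    refine h3.trans ?_
    rcases hpu.eq_or_lt with h4 | h4
    · have : m = u := by linarith
      subst this
      have : (m*m+E)^2 = (m^2+E)^2 := by ring
      rw [this]; linarith
    · have k1 : p^2+B*p^2-(A+B*u)*p ≤ 0 := by
        have := mul_le_mul_of_nonneg_left hA2 hp0
        linarith
      have k2 : (u^2+E)^2-A*u ≤ 0 := by linarith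
      have k3 := mul_le_mul_of_nonneg_left k1 (by linarith : 0 ≤ u - m)
      have k4 := mul_le_mul_of_nonneg_left k2 (by linarith : 0 ≤ m - p)
      have k5 : 0 ≤ (u^2+B)*((m-p)*(u-m)*(u-p)) := by
        apply mul_nonneg (by positivity)
        apply mul_nonneg (mul_nonneg _ _) <;> linarith
      have k6 : (u-p)*((u*m+E)^2 - (A*m+B*(m*(u-m)))) ≤ 0 := by
        rw [hEp] at *
        nlinarith
      have := nonpos_of_mul_nonpos_right k6 (by linarith)
      linarith

noncomputable def indI (d t : ℝ) : ℝ := if t ≤ d then 1 else 0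

lemma indI_nonneg (d t : ℝ) : 0 ≤ indI d t := by unfold indI; split_ifs <;> norm_num

lemma indI_mul (d e t : ℝ) : indI d t * indI e t = indI (min d e) t := by
  unfold indI
  by_cases h1 : t ≤ d <;> by_cases h2 : t ≤ e <;> simp [h1, h2]

lemma indI_int (d a b : ℝ) : IntervalIntegrable (indI d) volume a b := by
  apply Antitone.intervalIntegrable
  intro s t hst
  unfold indI
  split_ifs with h1 h2 h2
  · exact le_rfl
  · exact absurd (hst.trans h1) h2
  · norm_num
  · exact le_rfl

lemma indI_integral (d a b : ℝ) (hab : a ≤ b) :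
    ∫ t in a..b, indI d t = max (min b d - a) 0 := by
  have : indI d = (Set.Iic d).indicator (fun _ => (1:ℝ)) := by
    ext t; simp [indI, Set.indicator]
  rw [intervalIntegral.integral_of_le hab, this, setIntegral_indicator measurableSet_Iic,
    Set.Ioc_inter_Iic]
  simp [Real.volume_real_Ioc]

lemma sum_indI_int {ι : Type*} [Fintype ι] (v d : ι → ℝ) (a b : ℝ) :
    IntervalIntegrable (fun t => ∑ i, v i * indI (d i) t) volume a b := by
  have e : (fun t => ∑ i, v i * indI (d i) t) = ∑ i, fun t => v i * indI (d i) t := by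
    ext t; simp
  rw [e]
  refine IntervalIntegrable.sum _ fun i _ => ?_
  exact (indI_int _ _ _).const_mul _

lemma sum_indI_integral {ι : Type*} [Fintype ι] (v d : ι → ℝ) (a b : ℝ) (hab : a ≤ b) :
    ∫ t in a..b, ∑ i, v i * indI (d i) t = ∑ i, v i * max (min b (d i) - a) 0 := by
  rw [intervalIntegral.integral_finsetSum]
  · refine Finset.sum_congr rfl fun i _ => ?_
    rw [intervalIntegral.integral_const_mul, indI_integral _ _ _ hab]
  · intro i _
    exact (indI_int _ _ _).const_mul _

lemma sq_sum_indI {ι : Type*} [Fintype ι] (v d : ι → ℝ) :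
    (fun t => (∑ i, v i * indI (d i) t)^2)
      = fun t => ∑ x : ι × ι, (v x.1 * v x.2) * indI (min (d x.1) (d x.2)) t := by
  ext t
  rw [sq, Finset.sum_mul_sum, Fintype.sum_prod_type]
  refine Finset.sum_congr rfl fun i _ => Finset.sum_congr rfl fun j _ => ?_
  rw [← indI_mul]; ring

lemma layer_bound {ι : Type*} [Fintype ι] (w d χ : ι → ℝ) (u c A B E G : ℝ)
    (hw : ∀ i, 0 ≤ w i) (hd0 : ∀ i, 0 ≤ d i) (hd1 : ∀ i, d i ≤ 1)
    (hχ0 : ∀ i, 0 ≤ χ i) (hχ1 : ∀ i, χ i ≤ 1) (hgt : ∀ i, u < d i → χ i = 1)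
    (hlt : ∀ i, d i < u → χ i = 0)
    (hχ : ∑ i, w i * χ i = u) (hc : ∑ i, w i * d i = c)
    (hG : ∑ i, w i * χ i * d i = G) (hE : ∑ i, w i * max (d i - u) 0 = E)
    (hu : 0 < u) (hu1 : u < 1) (hE1 : E ≤ u*(1-u))
    (hB : 0 ≤ B) (hBG : B ≤ c + G) (hA1 : (u^2+E)^2/u ≤ A)
    (hA2 : E/(1-u) - B*(u - E/(1-u)) ≤ A) :
    ∑ i, ∑ j, w i * w j * (d i * d j * min (d i) (d j)) ≤
      c^2*u - B*(c*u - ∑ i, w i * d i * min (d i) u) + A*E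
       + B*(u*E - ∑ i, ∑ j, w i * w j * max (min (d i) (d j) - u) 0) := by
  have hE0 : 0 ≤ E := by
    rw [← hE]; exact Finset.sum_nonneg fun i _ => mul_nonneg (hw i) (le_max_right _ _)
  let F : ℝ → ℝ := fun t => ∑ i, (w i * d i) * indI (d i) t
  let m : ℝ → ℝ := fun t => ∑ i, w i * indI (d i) t
  have iF : ∀ a b, IntervalIntegrable F volume a b := fun a b => sum_indI_int _ _ _ _
  have im : ∀ a b, IntervalIntegrable m volume a b := fun a b => sum_indI_int _ _ _ _
  have iF2 : ∀ a b, IntervalIntegrable (fun t => F t^2) volume a b := fun a b => by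
    rw [sq_sum_indI]; exact sum_indI_int _ _ _ _
  have im2 : ∀ a b, IntervalIntegrable (fun t => m t^2) volume a b := fun a b => by
    rw [sq_sum_indI]; exact sum_indI_int _ _ _ _
  have hS : ∑ i, ∑ j, w i * w j * (d i * d j * min (d i) (d j)) = ∫ t in (0:ℝ)..1, F t^2 := by
    rw [sq_sum_indI, sum_indI_integral _ _ _ _ zero_le_one, Fintype.sum_prod_type]
    refine Finset.sum_congr rfl fun i _ => Finset.sum_congr rfl fun j _ => ?_
    have h1 : min (d i) (d j) ≤ 1 := (min_le_left _ _).trans (hd1 i)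
    have h2 : 0 ≤ min (d i) (d j) := le_min (hd0 i) (hd0 j)
    dsimp only
    rw [min_eq_right h1, sub_zero, max_eq_left h2]; ring
  have hP : ∫ t in (0:ℝ)..u, F t = ∑ i, w i * d i * min (d i) u := by
    simp only [F]
    rw [sum_indI_integral _ _ _ _ hu.le]
    refine Finset.sum_congr rfl fun i _ => ?_
    rw [sub_zero, max_eq_left (le_min hu.le (hd0 i)), min_comm]
  have hEm : ∫ t in u..1, m t = E := by
    simp only [m]
    rw [sum_indI_integral _ _ _ _ hu1.le, ← hE]
    refine Finset.sum_congr rfl fun i _ => ?_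
    rw [min_eq_right (hd1 i)]
  have hQ : ∫ t in u..1, m t^2 = ∑ i, ∑ j, w i * w j * max (min (d i) (d j) - u) 0 := by
    rw [sq_sum_indI, sum_indI_integral _ _ _ _ hu1.le, Fintype.sum_prod_type]
    refine Finset.sum_congr rfl fun i _ => Finset.sum_congr rfl fun j _ => ?_
    have h1 : min (d i) (d j) ≤ 1 := (min_le_left _ _).trans (hd1 i)
    dsimp only
    rw [min_eq_right h1]
  have hlow : ∫ t in (0:ℝ)..u, F t^2 ≤ ∫ t in (0:ℝ)..u, ((c^2 - B*c) + B*F t) := by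
    refine intervalIntegral.integral_mono_on hu.le (iF2 _ _)
      (intervalIntegrable_const.add ((iF _ _).const_mul _)) ?_
    intro t ht
    have h1 : G ≤ F t := by
      rw [← hG]
      refine Finset.sum_le_sum fun i _ => ?_
      have : χ i ≤ indI (d i) t := by
        unfold indI
        split_ifs with h
        · exact hχ1 i
        · rw [hlt i (by linarith [ht.2])]
      have := mul_le_mul_of_nonneg_left this (mul_nonneg (hw i) (hd0 i))
      linarith
    have h2 : F t ≤ c := by
      rw [← hc]
      refine Finset.sum_le_sum fun i _ => ?_
      apply mul_le_of_le_one_right (mul_nonneg (hw i) (hd0 i))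
      unfold indI; split_ifs <;> norm_num
    have h3 := mul_le_mul_of_nonneg_right (by linarith : B ≤ c + F t) (by linarith : 0 ≤ c - F t)
    linarith
  have hhigh : ∫ t in u..1, F t^2 ≤ ∫ t in u..1, ((A+B*u)*m t - B*m t^2) := by
    refine intervalIntegral.integral_mono_on_of_le_Ioo hu1.le (iF2 _ _)
      (((im _ _).const_mul _).sub ((im2 _ _).const_mul _)) ?_
    intro t ht
    have h1 : m t ≤ u := by
      rw [← hχ]
      refine Finset.sum_le_sum fun i _ => mul_le_mul_of_nonneg_left ?_ (hw i)
      unfold indI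
      split_ifs with h
      · rw [hgt i (ht.1.trans_le h)]
      · exact hχ0 i
    have h2 : F t ≤ m t := by
      refine Finset.sum_le_sum fun i _ => mul_le_mul_of_nonneg_right ?_ (indI_nonneg _ _)
      exact mul_le_of_le_one_right (hw i) (hd1 i)
    have h3 : F t ≤ u * m t + E := by
      rw [← hE, Finset.mul_sum, ← Finset.sum_add_distrib]
      refine Finset.sum_le_sum fun i _ => ?_
      have : (d i - u) * indI (d i) t ≤ max (d i - u) 0 := by
        unfold indI; split_ifs <;> simp
      have := mul_le_mul_of_nonneg_left this (hw i)
      linarith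
    have h4 : 0 ≤ F t := Finset.sum_nonneg fun i _ =>
      mul_nonneg (mul_nonneg (hw i) (hd0 i)) (indI_nonneg _ _)
    have := point_bound (F t) (m t) u E A B h4 h2 h3 h1 hu hu1 hE1 hE0 hB hA1 hA2
    linarith
  rw [hS, ← intervalIntegral.integral_add_adjacent_intervals (iF2 0 u) (iF2 u 1)]
  rw [intervalIntegral.integral_add intervalIntegrable_const ((iF _ _).const_mul _),
    intervalIntegral.integral_const_mul, hP, intervalIntegral.integral_const] at hlow
  rw [intervalIntegral.integral_sub ((im _ _).const_mul _) ((im2 _ _).const_mul _),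
    intervalIntegral.integral_const_mul, intervalIntegral.integral_const_mul, hEm, hQ] at hhigh
  simp only [smul_eq_mul] at hlow
  linarith

lemma core {ι : Type*} [Fintype ι] (w d : ι → ℝ) (a : ι → ι → ℝ) (c R : ℝ)
    (hw : ∀ i, 0 ≤ w i) (hw1 : ∑ i, w i = 1) (ha0 : ∀ i j, 0 ≤ a i j) (ha1 : ∀ i j, a i j ≤ 1)
    (hsym : ∀ i j, a i j = a j i) (hd : ∀ i, d i = ∑ j, w j * a i j)
    (hc : ∑ i, w i * d i = c) (hc0 : 0 < c) (hc1 : c < 1)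
    (hR1 : c^2*(1 - √(1-c)) + (1-√(1-c))^2*√(1-c) ≤ R) (hR2 : √c^5 ≤ R) :
    ∑ i, ∑ j, w i * w j * (d i * d j * min (d i) (d j)) ≤ R := by
  have hd0 : ∀ i, 0 ≤ d i := fun i => by
    rw [hd]; exact Finset.sum_nonneg fun j _ => mul_nonneg (hw j) (ha0 i j)
  have hd1 : ∀ i, d i ≤ 1 := fun i => by
    rw [hd, ← hw1]; exact Finset.sum_le_sum fun j _ => mul_le_of_le_one_right (hw j) (ha1 i j)
  obtain ⟨u, χ, hu0, hχ0, hχ1, hgt, hlt, hχ⟩ := exists_level w d hw hw1 hd0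
  have hbt := bathtub w d χ a u hw ha0 ha1 hsym hd hχ0 hχ1 hgt hχ
  obtain ⟨E, hE⟩ : ∃ E, ∑ i, w i * max (d i - u) 0 = E := ⟨_, rfl⟩
  have hE0 : 0 ≤ E := by
    rw [← hE]; exact Finset.sum_nonneg fun i _ => mul_nonneg (hw i) (le_max_right _ _)
  have hpt : ∀ i, max (d i - u) 0 = χ i * (d i - u) := by
    intro i
    rcases lt_trichotomy u (d i) with h | h | h
    · rw [hgt i h, max_eq_left (by linarith)]; ring
    · rw [← h]; simp
    · rw [hlt i h, max_eq_right (by linarith)]; ring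
  have hG : ∑ i, w i * χ i * d i = u^2 + E := by
    have : ∑ i, w i * χ i * d i = ∑ i, ((w i * χ i) * u + w i * max (d i - u) 0) := by
      refine Finset.sum_congr rfl fun i _ => ?_
      rw [hpt]; ring
    rw [this, Finset.sum_add_distrib, ← Finset.sum_mul, hχ, hE]; ring
  have hE1 : E ≤ u*(1-u) := by
    have : ∑ i, w i * χ i * d i ≤ ∑ i, w i * χ i :=
      Finset.sum_le_sum fun i _ => mul_le_of_le_one_right (mul_nonneg (hw i) (hχ0 i)) (hd1 i)
    rw [hG, hχ] at this; linarith
  have hphi : ∑ i, w i * (1 - χ i) * d i = c - (u^2+E) := by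
    rw [← hG, ← hc, ← Finset.sum_sub_distrib]
    refine Finset.sum_congr rfl fun i _ => by ring
  have hphi1 : c - (u^2+E) ≤ u*(1-u) := by
    have : ∑ i, w i * (1 - χ i) * d i ≤ ∑ i, w i * (1 - χ i) * u := by
      refine Finset.sum_le_sum fun i _ => ?_
      rcases lt_or_ge u (d i) with h | h
      · rw [hgt i h]; simp
      · exact mul_le_mul_of_nonneg_left h (mul_nonneg (hw i) (by linarith [hχ1 i]))
    rw [hphi, ← Finset.sum_mul] at this
    have h2 : ∑ i, w i * (1 - χ i) = 1 - u := by
      simp only [mul_sub, mul_one, Finset.sum_sub_distrib, hw1, hχ]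
    rw [h2] at this; linarith
  have h2G : 2*(u^2+E) ≤ c + u^2 := by
    have h1 : ∑ i, ∑ j, w i * w j * a i j * (χ i + χ j - 1) ≤ ∑ i, ∑ j, (w i * χ i) * (w j * χ j) := by
      refine Finset.sum_le_sum fun i _ => Finset.sum_le_sum fun j _ => ?_
      have : a i j * (χ i + χ j - 1) ≤ χ i * χ j := by
        have k1 : χ i + χ j - 1 ≤ χ i * χ j := by
          nlinarith [mul_nonneg (by linarith [hχ1 i] : 0 ≤ 1 - χ i) (by linarith [hχ1 j] : 0 ≤ 1 - χ j)]
        have k2 := mul_le_mul_of_nonneg_left k1 (ha0 i j)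
        have k3 := mul_le_mul_of_nonneg_right (ha1 i j) (mul_nonneg (hχ0 i) (hχ0 j))
        linarith
      have := mul_le_mul_of_nonneg_left this (mul_nonneg (hw i) (hw j))
      linarith
    rw [← Finset.sum_mul_sum, hχ] at h1
    have h3 : ∑ i, ∑ j, w i * w j * a i j * (χ i + χ j - 1)
        = ∑ i, ∑ j, w i * w j * a i j * (2 * χ i - 1) := by
      apply sum_symm_half
      intro i j
      rw [hsym j i]; ring
    have h4 : ∑ i, ∑ j, w i * w j * a i j * (2 * χ i - 1) = 2*(u^2+E) - c := by
      rw [← hG, ← hc, Finset.mul_sum, ← Finset.sum_sub_distrib]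
      refine Finset.sum_congr rfl fun i _ => ?_
      have : ∑ j, w i * w j * a i j * (2 * χ i - 1) = w i * (2 * χ i - 1) * ∑ j, w j * a i j := by
        rw [Finset.mul_sum]; refine Finset.sum_congr rfl fun j _ => by ring
      rw [this, ← hd]; ring
    rw [h3, h4] at h1
    linarith
  have hrhs : ∑ j, w j * (1 - χ j) * (2*u*d j - d j^2)
      = u*(c-(u^2+E)) + (c*u - ∑ i, w i * d i * min (d i) u) := by
    rw [← hphi, ← hc, Finset.mul_sum, Finset.sum_mul, ← Finset.sum_sub_distrib,
      ← Finset.sum_add_distrib]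
    refine Finset.sum_congr rfl fun i _ => ?_
    have : (1 - χ i)*(u - d i) = u - min (d i) u := by
      rcases lt_trichotomy u (d i) with h | h | h
      · rw [hgt i h, min_eq_right h.le]; ring
      · rw [← h]; simp
      · rw [hlt i h, min_eq_left h.le]; ring
    have e : w i * (1 - χ i) * (2*u*d i - d i^2) = u*(w i * (1 - χ i) * d i) + w i * d i * ((1 - χ i)*(u - d i)) := by
      ring
    rw [e, this]; ring
  rw [hrhs, hE] at hbt
  have hs : √(1-c)^2 = 1 - c := Real.sq_sqrt (by linarith)
  have hsp : 0 < √(1-c) := Real.sqrt_pos.2 (by linarith)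
  have hk : √c^2 = c := Real.sq_sqrt hc0.le
  have hkp : 0 < √c := Real.sqrt_pos.2 hc0
  have hk1 : √c < 1 := by nlinarith
  have hs1 : √(1-c) < 1 := by nlinarith
  have huk : u ≤ √c := Real.le_sqrt_of_sq_le (by linarith)
  have hau : 1 - √(1-c) ≤ u := by
    have : 1 - u ≤ √(1-c) := Real.le_sqrt_of_sq_le (by nlinarith)
    linarith
  have hu : 0 < u := by linarith
  have hu1 : u < 1 := by linarith
  obtain ⟨A, B, hB, hBG, hA1, hA2, hfin⟩ := final_ana c (1-√(1-c)) (√c) u E R hkp hk hc1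
    (by linarith) (by linarith) (by nlinarith) hau huk hE0 (by linarith)
    (by have : 1 - (1 - √(1-c)) = √(1-c) := by ring
        rw [this]; exact hR1) hR2
  have hL := layer_bound w d χ u c A B E (u^2+E) hw hd0 hd1 hχ0 hχ1 hgt hlt hχ hc hG hE hu hu1 hE1 hB
    (by linarith) hA1 hA2
  have := mul_le_mul_of_nonneg_left hbt hB
  linarith

lemma step_integral (K : ℕ) (q : ℕ → ℝ) (hq0 : q 0 = 0) (hqK : q K = 1)
    (hqmono : ∀ i < K, q i < q (i + 1)) (f : ℝ → ℝ) (v : ℕ → ℝ)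
    (hf : ∀ i < K, ∀ x ∈ Set.Ico (q i) (q (i+1)), f x = v i) :
    ∫ x in (0:ℝ)..1, f x = ∑ i : Fin K, (q (i+1) - q i) * v i := by
  have hint : ∀ k < K, IntervalIntegrable f volume (q k) (q (k+1)) := by
    intro k hk
    rw [intervalIntegrable_iff_integrableOn_Ioo_of_le (hqmono k hk).le]
    have : IntegrableOn (fun _ : ℝ => v k) (Set.Ioo (q k) (q (k+1))) volume :=
      integrableOn_const (by simp)
    exact this.congr_fun (fun x hx => (hf k hk x ⟨hx.1.le, hx.2⟩).symm) measurableSet_Ioo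
  have h := intervalIntegral.sum_integral_adjacent_intervals hint
  rw [hq0, hqK] at h
  rw [← h, Finset.sum_range]
  refine Finset.sum_congr rfl fun i _ => ?_
  rw [intervalIntegral.integral_of_le (hqmono i i.2).le, integral_Ioc_eq_integral_Ioo,
    setIntegral_congr_fun measurableSet_Ioo (g := fun _ => v i)
      (fun x hx => hf i i.2 x ⟨hx.1.le, hx.2⟩)]
  simp [Real.volume_real_Ioo, (hqmono i i.2).le]

theorem step_graphon_upper_bound (c : ℝ) (hc0 : 0 ≤ c) (hc1 : c ≤ 1)
    (K : ℕ) (hK : 0 < K) (A : ℝ → ℝ → ℝ)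
    (hA01 : ∀ x ∈ Set.Ico (0:ℝ) 1, ∀ y ∈ Set.Ico (0:ℝ) 1, A x y ∈ Set.Icc (0:ℝ) 1)
    (hsym : ∀ x ∈ Set.Ico (0:ℝ) 1, ∀ y ∈ Set.Ico (0:ℝ) 1, A x y = A y x)
    (hint : (∫ x in (0:ℝ)..1, ∫ y in (0:ℝ)..1, A x y) = c)
    (q : ℕ → ℝ) (hq0 : q 0 = 0) (hqK : q K = 1)
    (hqmono : ∀ i < K, q i < q (i + 1))
    (hstep : ∀ i < K, ∀ j < K,
      ∀ x₁ ∈ Set.Ico (q i) (q (i + 1)), ∀ x₂ ∈ Set.Ico (q i) (q (i + 1)),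
      ∀ y₁ ∈ Set.Ico (q j) (q (j + 1)), ∀ y₂ ∈ Set.Ico (q j) (q (j + 1)),
      A x₁ y₁ = A x₂ y₂) :
    Sfun A ≤ max ((1 - Real.sqrt (1 - c)) ^ 2 * ((c + 1) * Real.sqrt (1 - c) + c))
      (c ^ ((5 : ℝ) / 2)) := by
  have hle : ∀ j, j ≤ K → ∀ i, i ≤ j → q i ≤ q j := by
    intro j
    induction j with
    | zero => intro _ i hi; rw [Nat.le_zero.1 hi]
    | succ n ih =>
      intro hn i hi
      rcases Nat.lt_or_ge i (n+1) with h | h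
      · exact (ih (by omega) i (by omega)).trans (hqmono n (by omega)).le
      · rw [le_antisymm hi h]
  have hmem : ∀ i < K, q i ∈ Set.Ico (0:ℝ) 1 := by
    intro i hi
    refine ⟨?_, ?_⟩
    · rw [← hq0]; exact hle i hi.le 0 (Nat.zero_le _)
    · rw [← hqK]; exact (hqmono i hi).trans_le (hle K le_rfl (i+1) hi)
  have hself : ∀ i < K, q i ∈ Set.Ico (q i) (q (i+1)) := fun i hi => ⟨le_rfl, hqmono i hi⟩
  let w : Fin K → ℝ := fun i => q (i+1) - q i
  let a : Fin K → Fin K → ℝ := fun i j => A (q i) (q j)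
  let D : ℕ → ℝ := fun i => ∑ j : Fin K, (q (j+1) - q j) * A (q i) (q j)
  let d : Fin K → ℝ := fun i => D i
  have hell : ∀ i < K, ∀ x ∈ Set.Ico (q i) (q (i+1)), ell A x = D i := by
    intro i hi x hx
    exact step_integral K q hq0 hqK hqmono (A x) (fun j => A (q i) (q j))
      (fun j hj y hy => hstep i hi j hj x hx (q i) (hself i hi) y hy (q j) (hself j hj))
  have hw : ∀ i, 0 ≤ w i := fun i => sub_nonneg.2 (hqmono i i.2).le
  have hw1 : ∑ i, w i = 1 := by
    have := step_integral K q hq0 hqK hqmono (fun _ => 1) (fun _ => 1) (fun _ _ _ _ => rfl)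
    simp at this
    simp only [w]
    simpa using this.symm
  have ha0 : ∀ i j, 0 ≤ a i j := fun i j => (hA01 _ (hmem i i.2) _ (hmem j j.2)).1
  have ha1 : ∀ i j, a i j ≤ 1 := fun i j => (hA01 _ (hmem i i.2) _ (hmem j j.2)).2
  have hs : ∀ i j, a i j = a j i := fun i j => hsym _ (hmem i i.2) _ (hmem j j.2)
  have hd : ∀ i, d i = ∑ j, w j * a i j := fun i => rfl
  have hc : ∑ i, w i * d i = c := by
    rw [← hint]
    exact (step_integral K q hq0 hqK hqmono (ell A) D hell).symm
  have hS : Sfun A = ∑ i, ∑ j, w i * w j * (d i * d j * min (d i) (d j)) := by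
    have e1 : ∀ i < K, ∀ x ∈ Set.Ico (q i) (q (i+1)),
        (∫ y in (0:ℝ)..1, ell A x * ell A y * min (ell A x) (ell A y))
        = ∑ j : Fin K, (q (j+1) - q j) * (D i * D j * min (D i) (D j)) := by
      intro i hi x hx
      exact step_integral K q hq0 hqK hqmono _ (fun j => D i * D j * min (D i) (D j))
        (fun j hj y hy => by rw [hell i hi x hx, hell j hj y hy])
    have e2 := step_integral K q hq0 hqK hqmono _
      (fun i => ∑ j : Fin K, (q (j+1) - q j) * (D i * D j * min (D i) (D j))) e1
    refine Eq.trans e2 ?_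
    refine Finset.sum_congr rfl fun i _ => ?_
    rw [Finset.mul_sum]
    refine Finset.sum_congr rfl fun j _ => ?_
    simp only [w, d]; ring
  have hd0 : ∀ i, 0 ≤ d i := fun i => by
    rw [hd]; exact Finset.sum_nonneg fun j _ => mul_nonneg (hw j) (ha0 i j)
  have hd1 : ∀ i, d i ≤ 1 := fun i => by
    rw [hd, ← hw1]; exact Finset.sum_le_sum fun j _ => mul_le_of_le_one_right (hw j) (ha1 i j)
  rw [hS]
  have hSc : ∑ i, ∑ j, w i * w j * (d i * d j * min (d i) (d j)) ≤ c := by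
    have : ∑ i, ∑ j, w i * w j * (d i * d j * min (d i) (d j)) ≤ ∑ i, ∑ j, (w i * d i) * w j := by
      refine Finset.sum_le_sum fun i _ => Finset.sum_le_sum fun j _ => ?_
      have h1 : d j * min (d i) (d j) ≤ 1 :=
        mul_le_one₀ (hd1 j) (le_min (hd0 i) (hd0 j)) ((min_le_left _ _).trans (hd1 i))
      have := mul_le_mul_of_nonneg_left h1 (mul_nonneg (mul_nonneg (hw i) (hw j)) (hd0 i))
      linarith
    rw [← Finset.sum_mul_sum, hc, hw1, mul_one] at this
    exact this
  rcases hc0.eq_or_lt with h0 | h0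
  · refine hSc.trans (le_max_of_le_right ?_)
    rw [← h0]; exact Real.rpow_nonneg le_rfl _
  rcases hc1.eq_or_lt with h1 | h1
  · refine hSc.trans (le_max_of_le_right ?_)
    rw [h1, Real.one_rpow]
  refine core w d a c _ hw hw1 ha0 ha1 hs hd hc h0 h1 (le_max_of_le_left (le_of_eq ?_))
    (le_max_of_le_right (le_of_eq ?_))
  · have h2 : c = 1 - √(1-c)^2 := by rw [Real.sq_sqrt (by linarith)]; ring
    generalize √(1-c) = s at h2
    subst h2; ring
  · rw [Real.sqrt_eq_rpow, ← Real.rpow_natCast, ← Real.rpow_mul hc0]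
    norm_num
end
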